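/- arXiv:2503.22960 — 6 statements merged into one kernel-verified Lean document; each statement's English description precedes it below -/
import Mathlib

section
/- Let q be an integer with q ≥ 3 and let A ⊂ ℚ be a finite set with #A ≥ 2 such that s := dim_H K(q,A) < 1. Then there exists a constant c₁ > 0 such that every rational number ξ = v/u ∈ K(q,A), with u ∈ ℕ, v ∈ ℤ and gcd(v,u) = 1, admits an eventually periodic coding with period length at most c₁ u^s; that is, there exist a sequence (a_i)_{i≥1} with all a_i ∈ A, an integer j ≥ 0, and an integer n with 1 ≤ n ≤ c₁ u^s, such that ξ = ∑_{i=1}^∞ a_i/q^i and a_{i+n} = a_i for all i > j. -/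
open MeasureTheory

/-- The self-similar set `K(q,A) = { ∑_{i=1}^∞ a_i/q^i : a_i ∈ A }`. -/
noncomputable def Kset (q : ℕ) (A : Finset ℚ) : Set ℝ :=
  { x : ℝ | ∃ a : ℕ → ℚ, (∀ i, a i ∈ A) ∧ x = ∑' i : ℕ, (a i : ℝ) / (q : ℝ) ^ (i + 1) }

namespace EPC

noncomputable def val (q : ℕ) (b : ℕ → ℤ) : ℝ := ∑' i : ℕ, (b i : ℝ) / (q : ℝ) ^ (i + 1)

lemma val_unique (q : ℕ) (hq : 2 ≤ q) (b : ℕ → ℝ) (y : ℕ → ℝ) (C : ℝ) (hC : ∀ k, |y k| ≤ C)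
    (hy : ∀ k, y (k + 1) = q * y k - b k) :
    HasSum (fun i : ℕ => b i / (q : ℝ) ^ (i + 1)) (y 0) := by
  have hq' : (2 : ℝ) ≤ q := by exact_mod_cast hq
  have hq0 : (0 : ℝ) < q := by linarith
  have hC0 : 0 ≤ C := (abs_nonneg _).trans (hC 0)
  have hb : ∀ i, |b i| ≤ q * C + C := by
    intro i
    have : b i = q * y i - y (i + 1) := by rw [hy]; ring
    rw [this]
    refine (abs_sub _ _).trans ?_
    rw [abs_mul, abs_of_pos hq0]
    exact add_le_add (mul_le_mul_of_nonneg_left (hC i) hq0.le) (hC (i + 1))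
  have hgeo : Summable (fun i : ℕ => ((q : ℝ)⁻¹) ^ i) :=
    summable_geometric_of_lt_one (by positivity) (inv_lt_one_of_one_lt₀ (by linarith))
  have hs : Summable (fun i : ℕ => |b i / (q : ℝ) ^ (i + 1)|) := by
    refine Summable.of_nonneg_of_le (fun _ => abs_nonneg _) (fun i => ?_)
      (hgeo.mul_left ((q * C + C) * (q : ℝ)⁻¹))
    rw [abs_div, abs_of_pos (by positivity : (0 : ℝ) < (q : ℝ) ^ (i + 1)), div_eq_mul_inv, pow_succ,
      mul_inv, inv_pow]
    calc |b i| * (((q : ℝ) ^ i)⁻¹ * (q : ℝ)⁻¹) ≤ (q * C + C) * (((q : ℝ) ^ i)⁻¹ * (q : ℝ)⁻¹) := by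
          gcongr; exact hb i
      _ = _ := by ring
  rw [hasSum_iff_tendsto_nat_of_summable_norm (by exact hs)]
  have hpart : ∀ n, ∑ i ∈ Finset.range n, b i / (q : ℝ) ^ (i + 1) = y 0 - y n * ((q : ℝ)⁻¹) ^ n := by
    intro n
    induction n with
    | zero => simp
    | succ n ih =>
      rw [Finset.sum_range_succ, ih, hy, inv_pow, inv_pow]
      field_simp
      ring
  simp_rw [hpart]
  have : Filter.Tendsto (fun n => y n * ((q : ℝ)⁻¹) ^ n) Filter.atTop (nhds 0) := by
    refine squeeze_zero_norm (a := fun n => C * ((q : ℝ)⁻¹) ^ n) (fun n => ?_) ?_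
    · rw [Real.norm_eq_abs, abs_mul, abs_of_nonneg (by positivity : (0 : ℝ) ≤ ((q : ℝ)⁻¹) ^ n)]
      gcongr; exact hC n
    · simpa using hgeo.tendsto_atTop_zero.const_mul C
  simpa using tendsto_const_nhds.sub this

lemma geo_hasSum (q : ℕ) (hq : 2 ≤ q) (W : ℝ) :
    HasSum (fun i : ℕ => (W * (q - 1)) / (q : ℝ) ^ (i + 1)) W :=
  val_unique q hq (fun _ => W * (q - 1)) (fun _ => W) |W| (fun _ => le_rfl) (fun k => by ring)

lemma val_summable (q : ℕ) (hq : 2 ≤ q) (b : ℕ → ℤ) (W : ℝ) (hb : ∀ i, |(b i : ℝ)| ≤ W * (q - 1)) :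
    Summable (fun i : ℕ => (b i : ℝ) / (q : ℝ) ^ (i + 1)) := by
  refine Summable.of_norm_bounded (geo_hasSum q hq W).summable (fun i => ?_)
  rw [Real.norm_eq_abs, abs_div, abs_of_nonneg (by positivity : (0 : ℝ) ≤ (q : ℝ) ^ (i + 1))]
  gcongr
  exact hb i

lemma val_bound (q : ℕ) (hq : 2 ≤ q) (b : ℕ → ℤ) (W : ℝ) (hb : ∀ i, |(b i : ℝ)| ≤ W * (q - 1)) :
    |val q b| ≤ W := by
  rw [← (geo_hasSum q hq W).tsum_eq, ← Real.norm_eq_abs]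
  refine tsum_of_norm_bounded (geo_hasSum q hq W).summable.hasSum (fun i => ?_)
  rw [Real.norm_eq_abs, abs_div, abs_of_nonneg (by positivity : (0 : ℝ) ≤ (q : ℝ) ^ (i + 1))]
  gcongr
  exact hb i

lemma val_succ (q : ℕ) (hq : 2 ≤ q) (b : ℕ → ℤ) (W : ℝ) (hb : ∀ i, |(b i : ℝ)| ≤ W * (q - 1)) :
    val q (fun i => b (i + 1)) = q * val q b - b 0 := by
  have hq0 : (q : ℝ) ≠ 0 := by positivity
  unfold val
  rw [(val_summable q hq b W hb).tsum_eq_zero_add, mul_add, ← tsum_mul_left]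
  simp only [zero_add, pow_one]
  rw [mul_div_cancel₀ _ hq0, add_sub_cancel_left]
  congr 1
  ext i
  rw [pow_succ (q : ℝ) (i + 1)]
  field_simp

lemma val_shift (q : ℕ) (hq : 2 ≤ q) (b : ℕ → ℤ) (W : ℝ) (hb : ∀ i, |(b i : ℝ)| ≤ W * (q - 1)) (k : ℕ) :
    val q (fun i => b (i + (k + 1))) = q * val q (fun i => b (i + k)) - b k := by
  have := val_succ q hq (fun i => b (i + k)) W (fun i => hb _)
  simp only [zero_add] at this
  rw [← this]
  congr 1
  ext i
  congr 1
  ring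

def blk (q : ℕ) (b : ℕ → ℤ) : ℕ → ℤ
  | 0 => 0
  | n + 1 => q * blk q b n + b n

def DD (q : ℕ) (B : Finset ℤ) : ℕ → Finset ℤ
  | 0 => {0}
  | n + 1 => (DD q B n ×ˢ B).image (fun p => q * p.1 + p.2)

lemma blk_congr (q : ℕ) (b c : ℕ → ℤ) (n : ℕ) (h : ∀ i < n, b i = c i) : blk q b n = blk q c n := by
  induction n with
  | zero => rfl
  | succ n ih =>
    simp only [blk]
    rw [ih (fun i hi => h i (by omega)), h n (by omega)]

lemma blk_mem (q : ℕ) (B : Finset ℤ) (b : ℕ → ℤ) (hb : ∀ i, b i ∈ B) (n : ℕ) : blk q b n ∈ DD q B n := by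
  induction n with
  | zero => simp [blk, DD]
  | succ n ih =>
    simp only [blk, DD, Finset.mem_image, Finset.mem_product]
    exact ⟨(_, _), ⟨ih, hb n⟩, rfl⟩

lemma DD_word (q : ℕ) (B : Finset ℤ) (hB : B.Nonempty) (n : ℕ) (e : ℤ) (he : e ∈ DD q B n) :
    ∃ b : ℕ → ℤ, (∀ i, b i ∈ B) ∧ blk q b n = e := by
  induction n generalizing e with
  | zero =>
    obtain ⟨c, hc⟩ := hB
    simp only [DD, Finset.mem_singleton] at he
    exact ⟨fun _ => c, fun _ => hc, by simp [blk, he]⟩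
  | succ n ih =>
    simp only [DD, Finset.mem_image, Finset.mem_product] at he
    obtain ⟨⟨x, d⟩, ⟨hx, hd⟩, rfl⟩ := he
    obtain ⟨w, hw, rfl⟩ := ih x hx
    refine ⟨fun i => if i = n then d else w i, fun i => ?_, ?_⟩
    · dsimp only
      split_ifs
      · exact hd
      · exact hw i
    · simp only [blk, if_true]
      rw [blk_congr q _ w n]
      intro i hi
      simp [hi.ne]

lemma DD_bound (q : ℕ) (hq : 2 ≤ q) (B : Finset ℤ) (W : ℕ) (hW : ∀ b ∈ B, |b| ≤ W) (n : ℕ) (e : ℤ)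
    (he : e ∈ DD q B n) : |e| ≤ W * ((q : ℤ) ^ n - 1) := by
  induction n generalizing e with
  | zero =>
    simp only [DD, Finset.mem_singleton] at he
    simp [he]
  | succ n ih =>
    simp only [DD, Finset.mem_image, Finset.mem_product] at he
    obtain ⟨⟨x, d⟩, ⟨hx, hd⟩, rfl⟩ := he
    have h1 := ih x hx
    have h2 := hW d hd
    have hq' : (2 : ℤ) ≤ q := by exact_mod_cast hq
    have hW0 : (0 : ℤ) ≤ W := by positivity
    calc |(q : ℤ) * x + d| ≤ |(q : ℤ) * x| + |d| := abs_add_le _ _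
      _ = q * |x| + |d| := by rw [abs_mul, abs_of_nonneg (by positivity : (0 : ℤ) ≤ q)]
      _ ≤ q * (W * ((q : ℤ) ^ n - 1)) + W := by gcongr
      _ ≤ _ := by rw [pow_succ]; nlinarith

lemma orbit_blk (q : ℕ) (b : ℕ → ℤ) (u : ℝ) (x : ℕ → ℝ) (hx : ∀ k, x (k + 1) = q * x k - u * b k)
    (k n : ℕ) : x (k + n) = (q : ℝ) ^ n * x k - u * blk q (fun r => b (k + r)) n := by
  induction n with
  | zero => simp [blk]
  | succ n ih =>
    rw [← add_assoc, hx, ih]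
    simp only [blk]
    push_cast
    ring

def Kint (q : ℕ) (B : Finset ℤ) : Set ℝ := {x | ∃ b : ℕ → ℤ, (∀ i, b i ∈ B) ∧ x = val q b}

lemma bW (q : ℕ) (hq : 2 ≤ q) (B : Finset ℤ) (W : ℕ) (hW : ∀ b ∈ B, |b| ≤ W) (b : ℤ) (hb : b ∈ B) :
    |(b : ℝ)| ≤ W * ((q : ℝ) - 1) := by
  have h1 : |(b : ℝ)| ≤ W := by exact_mod_cast hW b hb
  have hq' : (2 : ℝ) ≤ q := by exact_mod_cast hq
  have : (0 : ℝ) ≤ W := by positivity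
  nlinarith

lemma val_block_mem (q : ℕ) (hq : 2 ≤ q) (B : Finset ℤ) (hB : B.Nonempty) (W : ℕ)
    (hW : ∀ b ∈ B, |b| ≤ W) (n : ℕ) (hn : 0 < n) (e : ℕ → ℤ) (he : ∀ i, e i ∈ DD q B n) :
    val (q ^ n) e ∈ Kint q B := by
  choose w hw hwe using fun i => DD_word q B hB n (e i) (he i)
  set b : ℕ → ℤ := fun j => w (j / n) (j % n) with hbdef
  have hb : ∀ j, b j ∈ B := fun j => hw _ _
  refine ⟨b, hb, ?_⟩
  have hbW := fun j => bW q hq B W hW (b j) (hb j)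
  have hQ : 2 ≤ q ^ n := hq.trans (Nat.le_self_pow hn.ne' q)
  have := val_unique (q ^ n) hQ (fun i => (e i : ℝ)) (fun k => val q (fun i => b (i + n * k))) W
    (fun k => val_bound q hq _ W (fun i => hbW _)) ?_
  · have h2 := this.tsum_eq
    simpa [val] using h2
  · intro k
    have h := orbit_blk q b 1 (fun k => val q (fun i => b (i + k)))
      (fun k => by rw [val_shift q hq b W hbW k]; ring) (n * k) n
    have h3 : blk q (fun r => b (n * k + r)) n = e k := by
      rw [← hwe k]
      apply blk_congr
      intro i hi
      simp only [hbdef]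
      rw [Nat.mul_add_div hn, Nat.mul_add_mod, Nat.div_eq_of_lt hi, Nat.mod_eq_of_lt hi, add_zero]
    rw [h3] at h
    rw [mul_add, mul_one, h]
    push_cast
    ring

/-- separation -/
lemma val_sep (Q : ℕ) (hQ : 2 ≤ Q) (W : ℕ) (e f : ℕ → ℤ) (he : ∀ i, |(e i : ℝ)| ≤ W * ((Q : ℝ) - 1))
    (hf : ∀ i, |(f i : ℝ)| ≤ W * ((Q : ℝ) - 1)) (m : ℕ) (hm : ∀ i < m, e i = f i)
    (hd : 2 * W + 1 ≤ |e m - f m|) : ((Q : ℝ) ^ (m + 1))⁻¹ ≤ |val Q e - val Q f| := by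
  have hQ0 : (0 : ℝ) < Q := by positivity
  have h1 := orbit_blk Q e 1 (fun k => val Q (fun i => e (i + k)))
      (fun k => by rw [val_shift Q hQ e W he k]; ring) 0 (m + 1)
  have h2 := orbit_blk Q f 1 (fun k => val Q (fun i => f (i + k)))
      (fun k => by rw [val_shift Q hQ f W hf k]; ring) 0 (m + 1)
  simp only [zero_add, add_zero, blk, one_mul] at h1 h2
  rw [blk_congr Q e f m hm] at h1
  push_cast at h1 h2
  have b1 := abs_le.1 (val_bound Q hQ (fun i => e (i + (m + 1))) W (fun i => he _))
  have b2 := abs_le.1 (val_bound Q hQ (fun i => f (i + (m + 1))) W (fun i => hf _))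
  have hd' : (2 : ℝ) * W + 1 ≤ |(e m : ℝ) - f m| := by exact_mod_cast hd
  rw [inv_le_iff_one_le_mul₀' (by positivity)]
  rw [← abs_of_pos (by positivity : (0 : ℝ) < (Q : ℝ) ^ (m + 1)), ← abs_mul]
  rcases le_abs'.1 hd' with h | h
  · refine le_trans ?_ (neg_le_abs _)
    linarith
  · refine le_trans ?_ (le_abs_self _)
    linarith

lemma dim_lower (Q : ℕ) (hQ : 2 ≤ Q) (W : ℕ) (k : ℕ) (hk : 2 ≤ k) (ε : Fin k → ℤ)
    (hε : ∀ i, |(ε i : ℝ)| ≤ W * ((Q : ℝ) - 1)) (hsep : ∀ i j, i ≠ j → 2 * W + 1 ≤ |ε i - ε j|)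
    (S : Set ℝ) (hS : ∀ σ : ℕ → Fin k, val Q (fun i => ε (σ i)) ∈ S) (hdim : dimH S ≠ ⊤) :
    (k : ℝ) ≤ (Q : ℝ) ^ (dimH S).toReal := by
  have hQ1 : (1 : ℝ) < Q := by exact_mod_cast (by omega : 1 < Q)
  have hk1 : (1 : ℝ) < k := by exact_mod_cast (by omega : 1 < k)
  set t : ℝ := Real.logb Q k with ht
  have ht0 : 0 < t := Real.logb_pos hQ1 hk1
  have hQt : (Q : ℝ) ^ t = k := Real.rpow_logb (by linarith) hQ1.ne' (by linarith)
  set g : (ℕ → Fin k) → ℝ := fun σ => val Q (fun i => ε (σ i)) with hg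
  have key : ∀ σ τ, |Real.ofDigits σ - Real.ofDigits τ| ≤ k * |g σ - g τ| ^ t := by
    intro σ τ
    by_cases h : σ = τ
    · subst h
      simp [Real.zero_rpow ht0.ne']
    · have hex : ∃ i, σ i ≠ τ i := Function.ne_iff.1 h
      classical
      set m := Nat.find hex with hm
      have hmin : ∀ i < m, σ i = τ i := fun i hi => not_not.1 (Nat.find_min hex hi)
      have h1 := val_sep Q hQ W (fun i => ε (σ i)) (fun i => ε (τ i)) (fun i => hε _) (fun i => hε _) m
        (fun i hi => by simp only [hmin i hi]) (hsep _ _ (Nat.find_spec hex))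
      refine (Real.abs_ofDigits_sub_ofDigits_le hmin).trans ?_
      calc ((k : ℝ) ^ m)⁻¹ = k * ((k : ℝ) ^ (m + 1))⁻¹ := by
            rw [pow_succ]; field_simp
        _ = k * (((Q : ℝ) ^ (m + 1))⁻¹) ^ t := by
            rw [Real.inv_rpow (by positivity), ← Real.rpow_natCast (Q : ℝ), ← Real.rpow_mul (by positivity),
              mul_comm ((m + 1 : ℕ) : ℝ) t, Real.rpow_mul (by positivity), hQt, Real.rpow_natCast]
        _ ≤ _ := by gcongr
  have : Nonempty (ℕ → Fin k) := ⟨fun _ => ⟨0, by omega⟩⟩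
  set F : ℝ → ℝ := fun x => Real.ofDigits (Function.invFun g x) with hF
  have hFg : ∀ σ, F (g σ) = Real.ofDigits σ := by
    intro σ
    have h1 : g (Function.invFun g (g σ)) = g σ := Function.invFun_eq ⟨σ, rfl⟩
    have h2 := key (Function.invFun g (g σ)) σ
    rw [h1] at h2
    simp only [sub_self, abs_zero, Real.zero_rpow ht0.ne', mul_zero] at h2
    exact sub_eq_zero.1 (abs_nonpos_iff.1 h2)
  obtain ⟨t', ht'⟩ : ∃ t' : NNReal, (t' : ℝ) = t := ⟨⟨t, ht0.le⟩, rfl⟩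
  have ht'0 : 0 < t' := by
    rw [← NNReal.coe_pos, ht']
    exact ht0
  have hH : HolderOnWith (k : NNReal) t' F (Set.range g) := by
    rintro _ ⟨σ, rfl⟩ _ ⟨τ, rfl⟩
    rw [hFg, hFg, edist_dist, edist_dist, Real.dist_eq, Real.dist_eq]
    rw [ht', ENNReal.ofReal_rpow_of_nonneg (abs_nonneg _) ht0.le]
    have : ((k : NNReal) : ENNReal) = ENNReal.ofReal (k : ℝ) := by simp
    rw [this, ← ENNReal.ofReal_mul (by positivity)]
    exact ENNReal.ofReal_le_ofReal (key σ τ)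
  have h1 := hH.dimH_image_le ht'0
  have h2 : (1 : ENNReal) ≤ dimH (F '' Set.range g) := by
    have : dimH (Set.Icc (0 : ℝ) 1) = 1 := by
      rw [Real.dimH_of_nonempty_interior (by simp)]
      simp
    rw [← this]
    apply dimH_mono
    intro x hx
    obtain ⟨σ, -, hσ⟩ := Real.ofDigits_SurjOn (b := k) (by omega) hx
    exact ⟨g σ, ⟨σ, rfl⟩, by rw [hFg, hσ]⟩
  have h3 : dimH (Set.range g) ≤ dimH S := dimH_mono (by rintro _ ⟨σ, rfl⟩; exact hS σ)
  have h4 : (t' : ENNReal) ≤ dimH S := by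
    have h5 := h2.trans h1
    rw [ENNReal.le_div_iff_mul_le (Or.inl (by simpa using ht'0.ne')) (Or.inl (by simp)), one_mul] at h5
    exact h5.trans h3
  have h5 : t ≤ (dimH S).toReal := by
    have := ENNReal.toReal_mono hdim h4
    simpa [ht'] using this
  rw [← hQt]
  exact Real.rpow_le_rpow_of_exponent_le hQ1.le h5

lemma count (q : ℕ) (hq : 2 ≤ q) (B : Finset ℤ) (hB : B.Nonempty) (W : ℕ)
    (hW : ∀ b ∈ B, |b| ≤ W) (n : ℕ) :
    ((DD q B n).card : ℝ) ≤ (2 * W + 1) * ((q : ℝ) ^ n) ^ (dimH (Kint q B)).toReal := by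
  have hq1 : (1 : ℝ) ≤ q := by exact_mod_cast (by omega : 1 ≤ q)
  have hone : (1 : ℝ) ≤ ((q : ℝ) ^ n) ^ (dimH (Kint q B)).toReal :=
    Real.one_le_rpow (one_le_pow₀ hq1) ENNReal.toReal_nonneg
  -- pigeonhole
  obtain ⟨c, hc⟩ : ∃ c : ℤ, (DD q B n).card ≤ (2 * W + 1) *
      ((DD q B n).filter (fun x => x % (2 * W + 1 : ℤ) = c)).card := by
    by_contra hcon
    push Not at hcon
    have hmaps : ∀ a ∈ DD q B n, a % (2 * W + 1 : ℤ) ∈ Finset.Ico (0 : ℤ) (2 * W + 1) := by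
      intro a _
      rw [Finset.mem_Ico]
      exact ⟨Int.emod_nonneg _ (by positivity), Int.emod_lt_of_pos _ (by positivity)⟩
    have h1 := Finset.card_eq_sum_card_fiberwise hmaps
    have h2 : ∑ c ∈ Finset.Ico (0 : ℤ) (2 * W + 1), (2 * W + 1) *
      ((DD q B n).filter (fun x => x % (2 * W + 1 : ℤ) = c)).card <
      ∑ c ∈ Finset.Ico (0 : ℤ) (2 * W + 1), (DD q B n).card :=
      Finset.sum_lt_sum_of_nonempty ⟨0, by simp⟩ (fun c _ => hcon c)
    rw [← Finset.mul_sum, ← h1] at h2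
    simp only [Finset.sum_const, Int.card_Ico, sub_zero, smul_eq_mul] at h2
    have : (2 * (W : ℤ) + 1).toNat = 2 * W + 1 := by omega
    rw [this] at h2
    exact lt_irrefl _ h2
  set E := (DD q B n).filter (fun x => x % (2 * W + 1 : ℤ) = c) with hE
  have hc' : ((DD q B n).card : ℝ) ≤ (2 * W + 1) * (E.card : ℝ) := by exact_mod_cast hc
  refine hc'.trans ?_
  gcongr
  rcases Nat.lt_or_ge E.card 2 with hlt | hge
  · refine le_trans ?_ hone
    exact_mod_cast (by omega : E.card ≤ 1)
  have hn : 0 < n := by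
    rcases Nat.eq_zero_or_pos n with h0 | h0
    · subst h0
      have : E.card ≤ ({0} : Finset ℤ).card := Finset.card_le_card (Finset.filter_subset _ _)
      simp at this
      omega
    · exact h0
  have hEmem : ∀ i, ((E.equivFin.symm i : E) : ℤ) ∈ E := fun i => (E.equivFin.symm i).2
  have hQ : 2 ≤ q ^ n := hq.trans (Nat.le_self_pow hn.ne' q)
  have := dim_lower (q ^ n) hQ W E.card hge (fun i => (E.equivFin.symm i : E)) ?_ ?_ (Kint q B) ?_
    (Real.dimH_ne_top _)
  · simpa using this
  · intro i
    have h := DD_bound q hq B W hW n _ (Finset.mem_filter.1 (hEmem i)).1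
    exact_mod_cast h
  · intro i j hij
    have hne : ((E.equivFin.symm i : E) : ℤ) ≠ (E.equivFin.symm j : E) := by
      intro h
      exact hij (E.equivFin.symm.injective (Subtype.ext h))
    have h1 := (Finset.mem_filter.1 (hEmem i)).2
    have h2 := (Finset.mem_filter.1 (hEmem j)).2
    have h3 : (2 * W + 1 : ℤ) ∣ ((E.equivFin.symm i : E) : ℤ) - (E.equivFin.symm j : E) :=
      Int.ModEq.dvd (show _ ≡ _ [ZMOD _] from h2.trans h1.symm)
    exact Int.le_of_dvd (abs_pos.2 (sub_ne_zero.2 hne)) ((dvd_abs _ _).2 h3)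
  · intro σ
    exact val_block_mem q hq B hB W hW n hn _ (fun i => (Finset.mem_filter.1 (hEmem _)).1)

/-- orbit pigeonhole and periodic modification -/
lemma periodic (q : ℕ) (hq : 2 ≤ q) (B : Finset ℤ) (hB : B.Nonempty) (W : ℕ)
    (hW : ∀ b ∈ B, |b| ≤ W) (u : ℕ) (hu : 0 < u) (z0 : ℤ) (b : ℕ → ℤ) (hb : ∀ i, b i ∈ B)
    (hz : (z0 : ℝ) / u = val q b) :
    ∃ (c : ℕ → ℤ) (jj n : ℕ), (∀ i, c i ∈ B) ∧
      HasSum (fun i : ℕ => (c i : ℝ) / (q : ℝ) ^ (i + 1)) ((z0 : ℝ) / u) ∧ 1 ≤ n ∧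
      (n : ℝ) ≤ ((2 * W + 2) * (2 * W + 1) * (q : ℝ) ^ (dimH (Kint q B)).toReal) *
        (u : ℝ) ^ (dimH (Kint q B)).toReal ∧
      ∀ i, jj ≤ i → c (i + n) = c i := by
  have hu' : (0 : ℝ) < u := by exact_mod_cast hu
  have hbW := fun j => bW q hq B W hW (b j) (hb j)
  let z : ℕ → ℤ := fun k => Nat.rec (motive := fun _ => ℤ) z0 (fun k zk => q * zk - u * b k) k
  have hz0 : z 0 = z0 := rfl
  have hzs : ∀ k, z (k + 1) = q * z k - u * b k := fun k => rfl
  have hzx : ∀ k, (z k : ℝ) = u * val q (fun i => b (i + k)) := by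
    intro k
    induction k with
    | zero =>
      rw [hz0]
      simp only [add_zero]
      rw [← hz]
      field_simp
    | succ k ih =>
      rw [hzs, val_shift q hq b W hbW k]
      push_cast
      rw [ih]
      ring
  have hzb : ∀ k, |z k| ≤ u * W := by
    intro k
    have h1 := val_bound q hq (fun i => b (i + k)) W (fun i => hbW _)
    have : |(z k : ℝ)| ≤ u * W := by
      rw [hzx, abs_mul, abs_of_pos hu']
      gcongr
    exact_mod_cast this
  set m := Nat.log q u + 1 with hm
  have hum : u < q ^ m := Nat.lt_pow_succ_log_self (by omega) u
  have hmu : q ^ m ≤ q * u := by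
    rw [hm, pow_succ, mul_comm]
    exact Nat.mul_le_mul_left _ (Nat.pow_log_le_self q hu.ne')
  set T : Finset ℤ := (DD q B m ×ˢ Finset.Icc (-(W : ℤ)) (W + 1)).image
    (fun p => u * p.1 / (q : ℤ) ^ m + p.2) with hT
  have hTcard : T.card ≤ (DD q B m).card * (2 * W + 2) := by
    refine Finset.card_image_le.trans ?_
    rw [Finset.card_product, Int.card_Icc]
    apply le_of_eq
    congr 1
    omega
  have hzT : ∀ k, z k ∈ T := by
    intro k
    have h1 := orbit_blk q b u (fun k => (z k : ℝ)) (fun k => by rw [hzs]; push_cast; ring) k m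
    have h2 : z (k + m) = (q : ℤ) ^ m * z k - u * blk q (fun r => b (k + r)) m := by exact_mod_cast h1
    set d := blk q (fun r => b (k + r)) m with hd
    have hdm : d ∈ DD q B m := blk_mem q B _ (fun r => hb _) m
    have h3 := abs_le.1 (hzb (k + m))
    have hum' : (u : ℤ) < (q : ℤ) ^ m := by exact_mod_cast hum
    have hQ0 : (0 : ℤ) < (q : ℤ) ^ m := by positivity
    rw [hT, Finset.mem_image]
    refine ⟨(d, z k - u * d / (q : ℤ) ^ m), ?_, by simp⟩
    rw [Finset.mem_product, Finset.mem_Icc]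
    refine ⟨hdm, ?_, ?_⟩
    all_goals
      have h4 := Int.mul_ediv_add_emod (u * d) ((q : ℤ) ^ m)
      have h5 := Int.emod_nonneg (u * d) hQ0.ne'
      have h6 := Int.emod_lt_of_pos (u * d) hQ0
      have hW0 : (0 : ℤ) ≤ W := by positivity
      have h7 : (u : ℤ) * W ≤ (q : ℤ) ^ m * W := by gcongr
      set r := u * d / (q : ℤ) ^ m
      dsimp only
      refine le_of_mul_le_mul_left ?_ hQ0
      nlinarith
  obtain ⟨i, hi, j, hj, hij, hzij⟩ := Finset.exists_ne_map_eq_of_card_lt_of_maps_to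
    (s := Finset.range (T.card + 1)) (t := T) (by simp) (f := z) (fun k _ => hzT k)
  wlog hlt : i < j generalizing i j
  · exact this j hj i hi hij.symm hzij.symm (by omega)
  rw [Finset.mem_range] at hi hj
  set p : ℕ → ℕ := fun k => if k < i then k else i + (k - i) % (j - i) with hp
  have hpos : 0 < j - i := by omega
  have hps : ∀ k, z (p (k + 1)) = z (p k + 1) := by
    intro k
    simp only [hp]
    by_cases h1 : k + 1 < i
    · rw [if_pos h1, if_pos (by omega)]
    · rw [if_neg h1]
      by_cases h2 : k < i
      · rw [if_pos h2]
        have : k + 1 = i := by omega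
        simp [this]
      · rw [if_neg h2]
        have h3 : k + 1 - i = (k - i) + 1 := by omega
        rw [h3]
        have hlt2 := Nat.mod_lt (k - i) hpos
        by_cases h4 : (k - i) % (j - i) + 1 = j - i
        · have h5 : (k - i + 1) % (j - i) = 0 := by
            rw [← Nat.mod_add_mod, h4, Nat.mod_self]
          rw [h5, add_zero, add_assoc, h4, hzij]
          congr 1
          omega
        · have h5 : (k - i + 1) % (j - i) = (k - i) % (j - i) + 1 := by
            rw [← Nat.mod_add_mod, Nat.mod_eq_of_lt (by omega)]
          rw [h5, add_assoc]
  refine ⟨fun k => b (p k), i, j - i, fun k => hb _, ?_, by omega, ?_, ?_⟩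
  · have := val_unique q hq (fun k => (b (p k) : ℝ)) (fun k => (z (p k) : ℝ) / u) W ?_ ?_
    · have hp0 : z (p 0) = z0 := by
        have : p 0 = 0 := by
          simp only [hp]
          split_ifs with h
          · rfl
          · have : i = 0 := by omega
            simp [this]
        rw [this]
        exact hz0
      simpa only [hp0] using this
    · intro k
      rw [abs_div, abs_of_pos hu', div_le_iff₀ hu', mul_comm]
      exact_mod_cast hzb (p k)
    · intro k
      simp only [hps, hzs]
      push_cast
      field_simp
  · have hc := count q hq B hB W hW m
    have h1 : ((j - i : ℕ) : ℝ) ≤ T.card := by exact_mod_cast (by omega : j - i ≤ T.card)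
    have h2 : (T.card : ℝ) ≤ (DD q B m).card * (2 * W + 2) := by exact_mod_cast hTcard
    have h3 : ((q : ℝ) ^ m) ^ (dimH (Kint q B)).toReal ≤
        (q : ℝ) ^ (dimH (Kint q B)).toReal * (u : ℝ) ^ (dimH (Kint q B)).toReal := by
      rw [← Real.mul_rpow (by positivity) (by positivity)]
      apply Real.rpow_le_rpow (by positivity) _ ENNReal.toReal_nonneg
      exact_mod_cast hmu
    calc ((j - i : ℕ) : ℝ) ≤ (DD q B m).card * (2 * W + 2) := h1.trans h2
      _ ≤ ((2 * W + 1) * ((q : ℝ) ^ (dimH (Kint q B)).toReal * (u : ℝ) ^ (dimH (Kint q B)).toReal)) *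
          (2 * W + 2) := by
          gcongr
          exact hc.trans (by gcongr)
      _ = _ := by ring
  · intro k hk
    simp only [hp]
    rw [if_neg (by omega), if_neg (by omega)]
    have : k + (j - i) - i = (k - i) + (j - i) := by omega
    rw [this, Nat.add_mod_right]

end EPC

open EPC in
/-- Every rational `v/u ∈ K(q,A)` (in lowest terms) admits an eventually periodic coding
with period length at most `c₁ · u^s`, where `s = dim_H K(q,A) < 1`. -/
theorem eventually_periodic_coding (q : ℕ) (hq : 3 ≤ q) (A : Finset ℚ) (hA : 2 ≤ A.card)
    (hdim : dimH (Kset q A) < 1) :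
    ∃ c₁ : ℝ, 0 < c₁ ∧
      ∀ (u : ℕ) (v : ℤ), 0 < u → Int.gcd v (u : ℤ) = 1 →
        ((v : ℝ) / (u : ℝ)) ∈ Kset q A →
        ∃ (a : ℕ → ℚ) (jj : ℕ) (n : ℕ),
          (∀ i, a i ∈ A) ∧
          (v : ℝ) / (u : ℝ) = ∑' i : ℕ, (a i : ℝ) / (q : ℝ) ^ (i + 1) ∧
          1 ≤ n ∧ (n : ℝ) ≤ c₁ * (u : ℝ) ^ (dimH (Kset q A)).toReal ∧
          ∀ i, jj ≤ i → a (i + n) = a i := by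
  have hq2 : 2 ≤ q := by omega
  set N : ℕ := ∏ a ∈ A, a.den with hN
  have hN0 : 0 < N := Finset.prod_pos (fun a _ => a.den_pos)
  have hNR : (0 : ℝ) < N := by exact_mod_cast hN0
  set φ : ℚ → ℤ := fun a => ((N : ℚ) * a).num with hφ
  have hφa : ∀ a ∈ A, ((φ a : ℤ) : ℚ) = N * a := by
    intro a ha
    obtain ⟨k, hk⟩ : a.den ∣ N := Finset.dvd_prod_of_mem _ ha
    have : (N : ℚ) * a = ((k * a.num : ℤ) : ℚ) := by
      rw [hk]
      push_cast
      have := Rat.den_mul_eq_num a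
      rw [mul_comm (a.den : ℚ), mul_assoc, this]
    simp only [hφ]
    rw [this, Rat.num_intCast]
  have hφR : ∀ a ∈ A, ((φ a : ℤ) : ℝ) = N * (a : ℝ) := by
    intro a ha
    exact_mod_cast congrArg (fun x : ℚ => (x : ℝ)) (hφa a ha)
  set B := A.image φ with hB
  have hBne : B.Nonempty := by
    apply Finset.Nonempty.image
    exact Finset.card_pos.1 (by omega)
  have hBinv : ∀ b ∈ B, ((b : ℚ) / N) ∈ A := by
    intro b hb
    obtain ⟨a, ha, rfl⟩ := Finset.mem_image.1 hb
    rw [hφa a ha, mul_div_cancel_left₀ _ (by exact_mod_cast hN0.ne')]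
    exact ha
  set W : ℕ := ∑ b ∈ B, b.natAbs with hWd
  have hW : ∀ b ∈ B, |b| ≤ W := by
    intro b hb
    have : b.natAbs ≤ W := Finset.single_le_sum (f := fun b : ℤ => b.natAbs) (fun _ _ => Nat.zero_le _) hb
    rw [Int.abs_eq_natAbs]
    exact_mod_cast this
  have hdimle : dimH (Kint q B) ≤ dimH (Kset q A) := by
    have hL : LipschitzWith (N : NNReal) (fun x : ℝ => (N : ℝ) * x) := by
      apply LipschitzWith.of_dist_le_mul
      intro x y
      rw [Real.dist_eq, Real.dist_eq, ← mul_sub, abs_mul, abs_of_pos hNR]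
      simp
    refine le_trans (dimH_mono ?_) (hL.dimH_image_le (Kset q A))
    rintro _ ⟨b, hb, rfl⟩
    refine ⟨_, ⟨fun i => (b i : ℚ) / N, fun i => hBinv _ (hb i), rfl⟩, ?_⟩
    simp only [val]
    rw [← tsum_mul_left]
    congr 1
    ext i
    push_cast
    field_simp
  have hsle : (dimH (Kint q B)).toReal ≤ (dimH (Kset q A)).toReal :=
    ENNReal.toReal_mono (Real.dimH_ne_top _) hdimle
  refine ⟨(2 * W + 2) * (2 * W + 1) * (q : ℝ) ^ (dimH (Kint q B)).toReal, by positivity, ?_⟩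
  intro u v hu _ hmem
  obtain ⟨a, ha, hav⟩ := hmem
  have hu1 : (1 : ℝ) ≤ u := by exact_mod_cast hu
  obtain ⟨c, jj, n, hc, hsum, hn1, hn, hper⟩ := periodic q hq2 B hBne W hW u hu (N * v)
    (fun i => φ (a i)) (fun i => Finset.mem_image_of_mem _ (ha i)) (by
      push_cast
      rw [mul_div_assoc, hav, val, ← tsum_mul_left]
      congr 1
      ext i
      rw [hφR _ (ha i)]
      ring)
  refine ⟨fun i => (c i : ℚ) / N, jj, n, fun i => hBinv _ (hc i), ?_, hn1, hn.trans ?_, ?_⟩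
  · have h := (hsum.mul_left ((N : ℝ)⁻¹)).tsum_eq
    have h2 : (N : ℝ)⁻¹ * (((N * v : ℤ) : ℝ) / u) = (v : ℝ) / u := by
      push_cast
      field_simp
    rw [← h2, ← h]
    congr 1
    ext i
    push_cast
    field_simp
  · gcongr
  · intro i hi
    simp only [hper i hi]
end

section
/- Let q be an integer with q ≥ 3, and let p_1, p_2, …, p_k be distinct prime numbers such that gcd(p_i, q) = 1 for all 1 ≤ i ≤ k. Then there exists a constant c₂ > 0 such that for every tuple (n_1, n_2, …, n_k) ∈ ℕ_0^k with (n_1,…,n_k) ≠ (0,…,0), the multiplicative order of q modulo p_1^{n_1} p_2^{n_2} ⋯ p_k^{n_k} is at least c₂ · p_1^{n_1} p_2^{n_2} ⋯ p_k^{n_k}. -/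
lemma aux_lift (p q : ℕ) (hp : p.Prime) (hq : 3 ≤ q) (hc : Nat.Coprime p q) :
    ∃ C : ℕ, 0 < C ∧ ∀ d n : ℕ, (p : ℤ) ^ n ∣ (q : ℤ) ^ d - 1 → p ^ n ∣ C * d := by
  have hpq : ¬ (p : ℤ) ∣ (q : ℤ) := by
    rw [Int.natCast_dvd_natCast]
    exact (Nat.Prime.coprime_iff_not_dvd hp).1 hc
  have hpi : Prime (p : ℤ) := Nat.prime_iff_prime_int.1 hp
  obtain ⟨e, he, hem⟩ : ∃ e : ℕ, 0 < e ∧ ∀ d : ℕ,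
      emultiplicity (p : ℤ) (((q : ℤ) ^ e) ^ d - 1) =
        emultiplicity (p : ℤ) (((q : ℤ) ^ e - 1) * d) := by
    rcases hp.eq_two_or_odd' with rfl | hodd
    · refine ⟨2, by norm_num, fun d => ?_⟩
      have h8 : (8 : ℤ) ∣ (q : ℤ) ^ 2 - 1 := by
        apply Int.eight_dvd_sq_sub_one_of_odd
        rw [← Int.not_even_iff_odd, even_iff_two_dvd]
        exact hpq
      have h := Int.two_pow_sub_pow' (x := (q : ℤ) ^ 2) (y := 1) d
        (dvd_trans (by norm_num) h8) (fun h => hpq (hpi.dvd_of_dvd_pow h))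
      rw [one_pow] at h
      rw [emultiplicity_mul hpi]
      exact_mod_cast h
    · refine ⟨p - 1, by have := hp.two_le; omega, fun d => ?_⟩
      have h1 : (p : ℤ) ∣ (q : ℤ) ^ (p - 1) - 1 := by
        have := Int.ModEq.pow_card_sub_one_eq_one hp (n := (q : ℤ))
          (by rw [Nat.isCoprime_iff_coprime]; exact hc.symm)
        exact this.symm.dvd
      have h := Int.emultiplicity_pow_sub_pow hp hodd (x := (q : ℤ) ^ (p - 1)) (y := 1) h1
        (fun h => hpq (hpi.dvd_of_dvd_pow h)) d
      rw [one_pow] at h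
      rw [emultiplicity_mul hpi, h, Int.natCast_emultiplicity]
  have h1 : 1 < q ^ e := Nat.one_lt_pow he.ne' (by omega)
  refine ⟨q ^ e - 1, by omega, fun d n h => ?_⟩
  have h2 : (p : ℤ) ^ n ∣ ((q : ℤ) ^ e) ^ d - 1 := by
    refine h.trans ?_
    rw [← pow_mul, mul_comm, pow_mul]
    simpa using sub_dvd_pow_sub_pow ((q : ℤ) ^ d) 1 e
  rw [pow_dvd_iff_le_emultiplicity, hem, ← pow_dvd_iff_le_emultiplicity] at h2
  zify [h1.le]
  exact h2

/-- Lower bound for the multiplicative order of `q` modulo `p₁^{n₁} ⋯ p_k^{n_k}`. -/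
theorem order_lower_bound (q : ℕ) (hq : 3 ≤ q) (k : ℕ) (hk : 1 ≤ k)
    (p : Fin k → ℕ) (hprime : ∀ i, (p i).Prime) (hinj : Function.Injective p)
    (hcop : ∀ i, Nat.Coprime (p i) q) :
    ∃ c₂ : ℝ, 0 < c₂ ∧
      ∀ n : Fin k → ℕ, n ≠ 0 →
        c₂ * ∏ i, (p i : ℝ) ^ (n i) ≤ (orderOf (q : ZMod (∏ i, p i ^ n i)) : ℝ) := by
  choose C hC0 hC using fun i => aux_lift (p i) q (hprime i) hq (hcop i)
  have hP : 0 < ∏ i, C i := Finset.prod_pos fun i _ => hC0 i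
  have hP' : (0 : ℝ) < ((∏ i, C i : ℕ) : ℝ) := by exact_mod_cast hP
  refine ⟨1 / ((∏ i, C i : ℕ) : ℝ), by positivity, fun n _ => ?_⟩
  have hM : (∏ i, (p i : ℝ) ^ (n i)) = ((∏ i, p i ^ n i : ℕ) : ℝ) := by push_cast; rfl
  rw [hM]
  have hMpos : 0 < ∏ i, p i ^ n i := Finset.prod_pos fun i _ => pow_pos (hprime i).pos _
  have hcopM : Nat.Coprime q (∏ i, p i ^ n i) :=
    Nat.Coprime.prod_right fun i _ => ((hcop i).symm).pow_right _
  have hdvd : ∀ i, p i ^ n i ∣ ∏ i, p i ^ n i := fun i => Finset.dvd_prod_of_mem _ (Finset.mem_univ i)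
  have hcp : Pairwise fun i j => Nat.Coprime (p i ^ n i) (p j ^ n j) := fun i j hij =>
    Nat.Coprime.pow _ _ ((Nat.coprime_primes (hprime i) (hprime j)).2 fun h => hij (hinj h))
  have key : ∀ d : ℕ, (∀ i, p i ^ n i ∣ (∏ i, C i) * d) → (∏ i, p i ^ n i) ∣ (∏ i, C i) * d :=
    fun d h => Finset.prod_dvd_of_isRelPrime
      (fun i _ j _ hij => Nat.coprime_iff_isRelPrime.1 (hcp hij)) fun i _ => h i
  generalize (∏ i, p i ^ n i) = M at *
  have hd0 : 0 < orderOf (q : ZMod M) := by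
    rw [orderOf_pos_iff, isOfFinOrder_iff_pow_eq_one]
    refine ⟨M.totient, Nat.totient_pos.2 hMpos, ?_⟩
    have := (ZMod.natCast_eq_natCast_iff _ _ _).2 (Nat.ModEq.pow_totient hcopM)
    exact_mod_cast this
  have hpow := pow_orderOf_eq_one (q : ZMod M)
  generalize orderOf (q : ZMod M) = d at *
  have hMd : (M : ℤ) ∣ (q : ℤ) ^ d - 1 := by
    rw [← ZMod.intCast_zmod_eq_zero_iff_dvd]
    push_cast
    rw [hpow, sub_self]
  have h3 : M ∣ (∏ i, C i) * d := key d fun i =>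
    (hC i d (n i) (dvd_trans (by exact_mod_cast hdvd i) hMd)).trans
      (Nat.mul_dvd_mul_right (Finset.dvd_prod_of_mem _ (Finset.mem_univ i)) d)
  have h4 := Nat.le_of_dvd (Nat.mul_pos hP hd0) h3
  rw [one_div, inv_mul_le_iff₀ hP']
  exact_mod_cast h4
end

section
/- Let (N, B, L) be a Hadamard triple in ℝ. If p is an integer with p ≥ 2 and gcd(p, N) = 1, then (N, B, pL) is also a Hadamard triple, where pL = {p·ℓ : ℓ ∈ L}. -/
/-- `(N,B,L)` is a Hadamard triple in `ℝ`: `N ≥ 2`, `B, L ⊂ ℤ` finite with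
`#B = #L ≥ 2`, and the matrix `((1/√#B) e^{2πi bℓ/N})_{b∈B, ℓ∈L}` is unitary;
equivalently, for all distinct `ℓ, ℓ' ∈ L`, `∑_{b∈B} e^{2πi b(ℓ-ℓ')/N} = 0`. -/
def IsHadamardTriple (N : ℕ) (B L : Finset ℤ) : Prop :=
  2 ≤ N ∧ 2 ≤ B.card ∧ B.card = L.card ∧
    ∀ l ∈ L, ∀ l' ∈ L, l ≠ l' →
      ∑ b ∈ B, Complex.exp (2 * Real.pi * Complex.I * (b : ℂ) * ((l : ℂ) - (l' : ℂ)) / (N : ℂ)) = 0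

theorem exp_eq_pow_aux (N : ℕ) (hN : 2 ≤ N) (k : ℤ) (q : ℕ) :
    Complex.exp (2 * Real.pi * Complex.I * (k : ℂ) * (q : ℂ) / (N : ℂ)) =
      (Complex.exp (2 * Real.pi * Complex.I / (N : ℂ)) ^ q) ^ (k % (N : ℤ)).toNat := by
  have hN0 : (N : ℂ) ≠ 0 := by exact_mod_cast (by omega : N ≠ 0)
  have h0 : 0 ≤ k % (N : ℤ) := Int.emod_nonneg _ (by omega)
  have hk : (k : ℂ) = (((k % (N : ℤ)).toNat : ℕ) : ℂ) + (N : ℂ) * ((k / (N : ℤ) : ℤ) : ℂ) := by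
    have h1 : k = (((k % (N : ℤ)).toNat : ℕ) : ℤ) + (N : ℤ) * (k / (N : ℤ)) := by
      rw [Int.toNat_of_nonneg h0, Int.emod_add_mul_ediv]
    exact_mod_cast congrArg (Int.cast : ℤ → ℂ) h1
  rw [← Complex.exp_nat_mul, ← Complex.exp_nat_mul, Complex.exp_eq_exp_iff_exists_int]
  refine ⟨(k / (N : ℤ)) * q, ?_⟩
  rw [hk]
  push_cast
  field_simp

theorem sum_aux (N : ℕ) (hN : 2 ≤ N) (B : Finset ℤ) (f : ℤ → ℤ) (p : ℕ)
    (hpN : Nat.Coprime p N)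
    (h : ∑ b ∈ B, Complex.exp (2 * Real.pi * Complex.I * (f b : ℂ) * ((1 : ℕ) : ℂ) / (N : ℂ)) = 0) :
    ∑ b ∈ B, Complex.exp (2 * Real.pi * Complex.I * (f b : ℂ) * (p : ℂ) / (N : ℂ)) = 0 := by
  have hζ := Complex.isPrimitiveRoot_exp N (by omega)
  simp only [exp_eq_pow_aux N hN] at h ⊢
  have hm := hζ.minpoly_eq_pow_coprime hpN
  generalize Complex.exp (2 * Real.pi * Complex.I / (N : ℂ)) = ζ at *
  let P : Polynomial ℤ := ∑ b ∈ B, Polynomial.X ^ (f b % (N : ℤ)).toNat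
  have hP : Polynomial.aeval ζ P = 0 := by simpa [P] using h
  have hd : minpoly ℤ ζ ∣ P := minpoly.isIntegrallyClosed_dvd (hζ.isIntegral (by omega)) hP
  rw [hm] at hd
  have := Polynomial.aeval_eq_zero_of_dvd_aeval_eq_zero hd (minpoly.aeval ℤ (ζ ^ p))
  simpa [P] using this

theorem hadamard_triple_scale (N : ℕ) (B L : Finset ℤ) (h : IsHadamardTriple N B L)
    (p : ℕ) (hp : 2 ≤ p) (hpN : Nat.Coprime p N) :
    IsHadamardTriple N B (L.image (fun l => (p : ℤ) * l)) := by
  obtain ⟨hN, hB, hBL, hs⟩ := h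
  have hp0 : (p : ℤ) ≠ 0 := by omega
  refine ⟨hN, hB, ?_, ?_⟩
  · rw [Finset.card_image_of_injective _ (mul_right_injective₀ hp0), hBL]
  · intro x hx y hy hxy
    obtain ⟨l, hl, rfl⟩ := Finset.mem_image.mp hx
    obtain ⟨m, hm, rfl⟩ := Finset.mem_image.mp hy
    have hlm : l ≠ m := fun e => hxy (by rw [e])
    have key := sum_aux N hN B (fun b => b * (l - m)) p hpN (by
      rw [← hs l hl m hm hlm]
      refine Finset.sum_congr rfl fun b _ => ?_
      congr 1
      push_cast
      ring)
    rw [← key]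
    refine Finset.sum_congr rfl fun b _ => ?_
    congr 1
    push_cast
    ring
end

section
/- Let (N, B, L) be a Hadamard triple in ℝ with 0 ∈ B ∩ L, and write d = gcd(B) (the greatest common divisor of the elements of B). Let K(N,L) be the self-similar set generated by the maps τ_ℓ(x) = (x+ℓ)/N, ℓ ∈ L. Define Λ₀ = −(K(N,L) ∩ (ℤ/d)), where ℤ/d = { m/d : m ∈ ℤ }, and Λ_n = N·Λ_{n−1} + L for n ≥ 1. Then Λ_{n−1} ⊆ Λ_n for all n ≥ 1. -/
/-- The self-similar set `K(N,L) = { ∑_{i=1}^∞ ℓ_i/N^i : ℓ_i ∈ L }`. -/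
noncomputable def KsetZ (N : ℕ) (L : Finset ℤ) : Set ℝ :=
  { x : ℝ | ∃ a : ℕ → ℤ, (∀ i, a i ∈ L) ∧ x = ∑' i : ℕ, (a i : ℝ) / (N : ℝ) ^ (i + 1) }

theorem aux_hasSum (N : ℕ) (hN : 2 ≤ N) (M : ℝ) :
    Summable (fun i : ℕ => M / (N : ℝ) ^ (i + 1)) := by
  have hN' : (2 : ℝ) ≤ N := by exact_mod_cast hN
  have h1 : Summable (fun i : ℕ => ((N : ℝ)⁻¹) ^ i) :=
    summable_geometric_of_lt_one (by positivity) (inv_lt_one_of_one_lt₀ (by linarith))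
  have h2 := h1.mul_left (M / N)
  refine h2.congr ?_
  intro i
  rw [pow_succ, inv_pow]
  field_simp

theorem aux_bound (L : Finset ℤ) : ∃ M : ℝ, ∀ l ∈ L, |(l : ℝ)| ≤ M := by
  refine ⟨∑ l ∈ L, |(l : ℝ)|, fun l hl => ?_⟩
  exact Finset.single_le_sum (f := fun l : ℤ => |(l : ℝ)|) (fun _ _ => abs_nonneg _) hl

theorem aux_norm (N : ℕ) (z M : ℝ) (i : ℕ) (h : |z| ≤ M) :
    ‖z / (N : ℝ) ^ (i + 1)‖ ≤ M / (N : ℝ) ^ (i + 1) := by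
  rw [Real.norm_eq_abs, abs_div, abs_of_nonneg (by positivity : (0 : ℝ) ≤ (N : ℝ) ^ (i + 1))]
  gcongr

theorem aux_shift (N : ℕ) (hN : 2 ≤ N) (L : Finset ℤ) (a : ℕ → ℤ) (ha : ∀ i, a i ∈ L) :
    (N : ℝ) * ∑' i : ℕ, (a i : ℝ) / (N : ℝ) ^ (i + 1)
      = a 0 + ∑' i : ℕ, (a (i + 1) : ℝ) / (N : ℝ) ^ (i + 1) := by
  have hN' : (2 : ℝ) ≤ N := by exact_mod_cast hN
  obtain ⟨M, hM⟩ := aux_bound L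
  have hs : Summable (fun i : ℕ => (a i : ℝ) / (N : ℝ) ^ (i + 1)) :=
    Summable.of_norm_bounded (aux_hasSum N hN M) (fun i => aux_norm N _ M i (hM _ (ha i)))
  rw [hs.tsum_eq_zero_add, mul_add, ← tsum_mul_left]
  congr 1
  · field_simp
    simp [mul_comm]
  · congr 1
    ext i
    rw [pow_succ (N : ℝ) (i + 1)]
    field_simp

theorem aux_K_bdd (N : ℕ) (hN : 2 ≤ N) (L : Finset ℤ) :
    ∃ C : ℝ, ∀ x ∈ KsetZ N L, |x| ≤ C := by
  obtain ⟨M, hM⟩ := aux_bound L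
  refine ⟨∑' i : ℕ, M / (N : ℝ) ^ (i + 1), ?_⟩
  rintro x ⟨a, ha, rfl⟩
  exact tsum_of_norm_bounded (aux_hasSum N hN M).hasSum
    (fun i => aux_norm N _ M i (hM _ (ha i)))

theorem aux_K_step (N : ℕ) (hN : 2 ≤ N) (L : Finset ℤ) (x : ℝ) (hx : x ∈ KsetZ N L) :
    ∃ l ∈ L, (N : ℝ) * x - l ∈ KsetZ N L := by
  obtain ⟨a, ha, rfl⟩ := hx
  refine ⟨a 0, ha 0, fun i => a (i + 1), fun i => ha _, ?_⟩
  rw [aux_shift N hN L a ha]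
  ring

theorem aux_inj (N : ℕ) (B L : Finset ℤ) (h : IsHadamardTriple N B L) (l l' : ℤ)
    (hl : l ∈ L) (hl' : l' ∈ L) (hdvd : (N : ℤ) ∣ (B.gcd id) * (l - l')) : l = l' := by
  obtain ⟨hN, hB, hBL, hs⟩ := h
  by_contra hne
  have h0 := hs l hl l' hl' hne
  have hN0 : (N : ℂ) ≠ 0 := by
    have : N ≠ 0 := by omega
    exact_mod_cast this
  have h1 : ∀ b ∈ B, Complex.exp (2 * Real.pi * Complex.I * (b : ℂ) *
      ((l : ℂ) - (l' : ℂ)) / (N : ℂ)) = 1 := by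
    intro b hb
    have h2 : (N : ℤ) ∣ b * (l - l') :=
      hdvd.trans (mul_dvd_mul_right (Finset.gcd_dvd (f := id) hb) _)
    obtain ⟨k, hk⟩ := h2
    rw [Complex.exp_eq_one_iff]
    refine ⟨k, ?_⟩
    have hk' : (b : ℂ) * ((l : ℂ) - l') = N * k := by exact_mod_cast hk
    rw [mul_assoc _ (b : ℂ), hk']
    field_simp
  rw [Finset.sum_congr rfl h1] at h0
  simp at h0
  subst h0
  simp at hB

theorem aux_d (B : Finset ℤ) (hB : 2 ≤ B.card) : B.gcd id ≠ 0 := by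
  intro h0
  rw [Finset.gcd_eq_zero_iff] at h0
  have : B ⊆ {0} := fun b hb => by simpa using h0 b hb
  have := Finset.card_le_card this
  simp at this
  omega

theorem aux_back (N : ℕ) (B L : Finset ℤ) (h : IsHadamardTriple N B L) (m : ℤ)
    (hm : (m : ℝ) / ((B.gcd id : ℤ) : ℝ) ∈ KsetZ N L) :
    ∃ m' : ℤ, ∃ l ∈ L, (m' : ℝ) / ((B.gcd id : ℤ) : ℝ) ∈ KsetZ N L ∧
      m = N * m' - (B.gcd id) * l := by
  have hN := h.1
  have hd := aux_d B h.2.1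
  have hinj := aux_inj N B L h
  generalize B.gcd id = d at *
  have hdR : (d : ℝ) ≠ 0 := by exact_mod_cast hd
  let F : Set ℤ := {m : ℤ | (m : ℝ) / (d : ℝ) ∈ KsetZ N L}
  have hfin : F.Finite := by
    obtain ⟨C, hC⟩ := aux_K_bdd N hN L
    refine (Set.finite_Icc (-⌈C * |(d : ℝ)|⌉) ⌈C * |(d : ℝ)|⌉).subset ?_
    intro k hk
    have h1 := hC _ hk
    rw [abs_div, div_le_iff₀ (abs_pos.mpr hdR)] at h1
    have h2 := h1.trans (Int.le_ceil _)
    have h3 : |k| ≤ ⌈C * |(d : ℝ)|⌉ := by exact_mod_cast h2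
    exact abs_le.mp h3
  have hstep : ∀ k : F, ∃ k' : F, ∃ l ∈ L, (k' : ℤ) = N * (k : ℤ) - d * l := by
    rintro ⟨k, hk⟩
    obtain ⟨l, hl, hl2⟩ := aux_K_step N hN L _ hk
    refine ⟨⟨N * k - d * l, ?_⟩, l, hl, rfl⟩
    change (((N * k - d * l : ℤ)) : ℝ) / (d : ℝ) ∈ KsetZ N L
    convert hl2 using 1
    push_cast
    field_simp
  choose f g hg hfg using hstep
  have hf : Function.Injective f := by
    intro x y hxy
    have hx := hfg x
    have hy := hfg y
    rw [hxy, hy] at hx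
    have hgl : g x = g y := hinj _ _ (hg x) (hg y) ⟨(x : ℤ) - y, by linarith⟩
    rw [hgl] at hx
    have hN0 : (N : ℤ) ≠ 0 := by omega
    exact Subtype.ext (mul_left_cancel₀ hN0 (by linarith))
  haveI : Finite F := hfin
  obtain ⟨k, hk⟩ := (Finite.injective_iff_surjective.mp hf) ⟨m, hm⟩
  refine ⟨k, g k, hg k, k.2, ?_⟩
  rw [← hfg k, hk]

theorem spectrum_levels_increasing (N : ℕ) (B L : Finset ℤ)
    (h : IsHadamardTriple N B L) (hB0 : (0 : ℤ) ∈ B) (hL0 : (0 : ℤ) ∈ L)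
    (d : ℤ) (hd : d = B.gcd id)
    (Λ : ℕ → Set ℝ)
    (hΛ0 : Λ 0 = (fun x : ℝ => -x) '' (KsetZ N L ∩ { x : ℝ | ∃ m : ℤ, x = (m : ℝ) / (d : ℝ) }))
    (hΛ : ∀ n, Λ (n + 1) = { y : ℝ | ∃ x ∈ Λ n, ∃ l ∈ L, y = (N : ℝ) * x + (l : ℝ) }) :
    ∀ n, Λ n ⊆ Λ (n + 1) := by
  intro n
  induction n with
  | zero =>
    rw [hΛ 0, hΛ0]
    rintro _ ⟨x, ⟨hxK, m, rfl⟩, rfl⟩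
    have hd0 := aux_d B h.2.1
    rw [← hd] at hd0
    have hdR : (d : ℝ) ≠ 0 := by exact_mod_cast hd0
    obtain ⟨m', l, hl, hK, hm⟩ := aux_back N B L h m (by rw [← hd]; exact hxK)
    rw [← hd] at hK hm
    refine ⟨-((m' : ℝ) / d), ⟨_, ⟨hK, m', rfl⟩, rfl⟩, l, hl, ?_⟩
    subst hm
    push_cast
    field_simp
    ring
  | succ n ih =>
    rw [hΛ (n + 1), hΛ n]
    rintro _ ⟨x, hx, l, hl, rfl⟩
    refine ⟨x, ?_, l, hl, rfl⟩
    rw [← hΛ n]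
    exact ih hx
end

section
/- Let (N, B, L) be a Hadamard triple in ℝ with 0 ∈ B ∩ L, write d = gcd(B), and let K(N,L) be the self-similar set generated by the maps τ_ℓ(x) = (x+ℓ)/N, ℓ ∈ L. Then every x ∈ K(N,L) ∩ (ℤ/d), where ℤ/d = { m/d : m ∈ ℤ }, is a periodic point of the iterated function system: there exist k ∈ ℕ and ℓ_1, ℓ_2, …, ℓ_k ∈ L such that τ_{ℓ_k} ∘ τ_{ℓ_{k−1}} ∘ ⋯ ∘ τ_{ℓ_1}(x) = x. -/
theorem aux_digit (N : ℕ) (B L : Finset ℤ) (h : IsHadamardTriple N B L)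
    (d : ℤ) (hd : d = B.gcd id) (l l' : ℤ) (hl : l ∈ L) (hl' : l' ∈ L)
    (c : ℤ) (hc : d * (l - l') = N * c) : l = l' := by
  by_contra hne
  obtain ⟨hN, hB, -, hs⟩ := h
  have h1 := hs l hl l' hl' hne
  have hN0 : (N : ℂ) ≠ 0 := by
    have : N ≠ 0 := by omega
    exact_mod_cast this
  have h2 : ∀ b ∈ B, Complex.exp (2 * Real.pi * Complex.I * (b : ℂ) * ((l : ℂ) - (l' : ℂ)) / (N : ℂ)) = 1 := by
    intro b hb
    have hdb : d ∣ b := by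
      rw [hd]
      exact Finset.gcd_dvd (f := id) hb
    obtain ⟨e, he⟩ := hdb
    rw [Complex.exp_eq_one_iff]
    refine ⟨e * c, ?_⟩
    have h3 : (b : ℂ) * ((l : ℂ) - (l' : ℂ)) = N * (e * c) := by
      have : b * (l - l') = N * (e * c) := by
        rw [he]; linear_combination e * hc
      exact_mod_cast this
    rw [div_eq_iff hN0]
    push_cast
    linear_combination (2 * Real.pi * Complex.I) * h3
  rw [Finset.sum_congr rfl h2] at h1
  simp at h1
  rw [h1] at hB
  simp at hB

theorem aux_sum (N : ℕ) (hN : 2 ≤ N) (a : ℕ → ℤ) (C : ℝ) (ha : ∀ i, |(a i : ℝ)| ≤ C) :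
    Summable (fun i : ℕ => (a i : ℝ) / (N : ℝ) ^ (i + 1)) ∧
    |∑' i : ℕ, (a i : ℝ) / (N : ℝ) ^ (i + 1)| ≤ C * ∑' i : ℕ, (1 / 2 : ℝ) ^ i := by
  have hb : ∀ i : ℕ, ‖(a i : ℝ) / (N : ℝ) ^ (i + 1)‖ ≤ C * (1 / 2 : ℝ) ^ i := by
    intro i
    have hN' : (2 : ℝ) ≤ N := by exact_mod_cast hN
    have hC : 0 ≤ C := (abs_nonneg _).trans (ha 0)
    rw [norm_div, Real.norm_eq_abs, div_eq_mul_inv]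
    refine mul_le_mul (ha i) ?_ (by positivity) hC
    rw [one_div, inv_pow]
    refine inv_anti₀ (by positivity) ?_
    rw [norm_pow, Real.norm_of_nonneg (by positivity)]
    calc (2 : ℝ) ^ i ≤ 2 ^ (i + 1) := pow_le_pow_right₀ (by norm_num) (by omega)
      _ ≤ (N : ℝ) ^ (i + 1) := by gcongr
  have hg : Summable (fun i : ℕ => C * (1 / 2 : ℝ) ^ i) := summable_geometric_two.mul_left C
  refine ⟨Summable.of_norm_bounded hg hb, ?_⟩
  have := tsum_of_norm_bounded hg.hasSum hb
  rwa [tsum_mul_left] at this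

/-- Every point of `K(N,L) ∩ (ℤ/d)` is a periodic point of the IFS
`{τ_ℓ(x) = (x+ℓ)/N : ℓ ∈ L}`: there is a chain `x = x₀, x₁, …, x_k = x`
with `x_{i+1} = τ_{ℓ_{i+1}}(x_i)` for some `ℓ_{i+1} ∈ L`. -/
theorem periodic_point_of_integer_point (N : ℕ) (B L : Finset ℤ)
    (h : IsHadamardTriple N B L) (hB0 : (0 : ℤ) ∈ B) (hL0 : (0 : ℤ) ∈ L)
    (d : ℤ) (hd : d = B.gcd id)
    (x : ℝ) (hx : x ∈ KsetZ N L ∩ { y : ℝ | ∃ m : ℤ, y = (m : ℝ) / (d : ℝ) }) :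
    ∃ k : ℕ, 1 ≤ k ∧ ∃ xs : ℕ → ℝ,
      xs 0 = x ∧ xs k = x ∧
      ∀ i < k, ∃ l ∈ L, xs (i + 1) = (xs i + (l : ℝ)) / (N : ℝ) := by
  obtain ⟨⟨a, ha, hxa⟩, m, hm⟩ := hx
  have hN : 2 ≤ N := h.1
  have hN0 : (N : ℝ) ≠ 0 := by
    have : N ≠ 0 := by omega
    exact_mod_cast this
  have hd0 : d ≠ 0 := by
    intro h0
    rw [hd, Finset.gcd_eq_zero_iff] at h0
    have h2 := h.2.1
    have : B ⊆ {0} := fun b hb => by simpa using h0 b hb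
    have := Finset.card_le_card this
    simp at this
    omega
  have hdr : (d : ℝ) ≠ 0 := by exact_mod_cast hd0
  obtain ⟨C, hC⟩ : ∃ C : ℝ, ∀ l ∈ L, |(l : ℝ)| ≤ C := by
    refine ⟨∑ l ∈ L, |(l : ℝ)|, fun l hl => ?_⟩
    exact Finset.single_le_sum (f := fun l : ℤ => |(l : ℝ)|) (fun i _ => abs_nonneg _) hl
  have hS := fun j : ℕ => aux_sum N hN (fun i => a (i + j)) C (fun i => hC _ (ha _))
  set X : ℕ → ℝ := fun j => ∑' i : ℕ, (a (i + j) : ℝ) / (N : ℝ) ^ (i + 1) with hX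
  have hX0 : X 0 = x := by rw [hxa]; simp [hX]
  have hrec : ∀ j, X j = (X (j + 1) + (a j : ℝ)) / N := by
    intro j
    have h1 := (hS j).1.tsum_eq_zero_add
    have h2 : ∑' i : ℕ, (a (i + 1 + j) : ℝ) / (N : ℝ) ^ (i + 1 + 1) = X (j + 1) / N := by
      rw [hX, ← tsum_div_const]
      refine tsum_congr fun i => ?_
      rw [pow_succ (N : ℝ) (i + 1), div_div, show i + 1 + j = i + (j + 1) by ring]
    have h3 : X j = (a (0 + j) : ℝ) / (N : ℝ) ^ (0 + 1) + X (j + 1) / N := by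
      rw [← h2]; exact h1
    rw [h3]
    simp
    ring
  have hM : ∀ j, ∃ M : ℤ, X j = (M : ℝ) / d := by
    intro j
    induction j with
    | zero => exact ⟨m, by rw [hX0, hm]⟩
    | succ j ih =>
      obtain ⟨M, hM⟩ := ih
      refine ⟨N * M - d * a j, ?_⟩
      have h1 := hrec j
      rw [hM] at h1
      field_simp at h1 ⊢
      push_cast
      linear_combination -h1
  choose M hM using hM
  set R : ℝ := C * ∑' i : ℕ, (1 / 2 : ℝ) ^ i with hR
  have hbd : ∀ j, M j ∈ Set.Icc (-⌈R * |(d : ℝ)|⌉) ⌈R * |(d : ℝ)|⌉ := by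
    intro j
    have h1 : |X j| ≤ R := (hS j).2
    rw [hM, abs_div, div_le_iff₀ (abs_pos.mpr hdr)] at h1
    have h2 := h1.trans (Int.le_ceil _)
    rw [Set.mem_Icc, ← abs_le]
    exact_mod_cast h2
  obtain ⟨p, -, q, -, hpq, he⟩ := Set.infinite_univ.exists_lt_map_eq_of_mapsTo
    (f := M) (fun j _ => hbd j) (Set.finite_Icc _ _)
  have hback : ∀ i j, X (i + 1) = X (j + 1) → X i = X j := by
    intro i j hij
    have h1 := hrec i
    have h2 := hrec j
    have h3 : a i = a j := by
      refine aux_digit N B L h d hd _ _ (ha i) (ha j) (M i - M j) ?_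
      have : (d : ℝ) * ((a i : ℝ) - a j) = N * (M i - M j) := by
        rw [hij] at h1
        rw [hM i] at h1
        rw [hM j] at h2
        field_simp at h1 h2
        linear_combination h2 - h1
      exact_mod_cast this
    rw [h1, h2, hij, h3]
  have hdesc : ∀ p k, X p = X (p + k) → X 0 = X k := by
    intro p k
    induction p with
    | zero => intro h; simpa using h
    | succ p ih =>
      intro h
      apply ih
      apply hback
      rw [h]; congr 1; ring
  have hk : X 0 = X (q - p) := by
    apply hdesc p
    rw [Nat.add_sub_cancel' hpq.le, hM, hM, he]
  refine ⟨q - p, by omega, fun i => X (q - p - i), ?_, ?_, ?_⟩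
  · simp only [Nat.sub_zero]
    rw [← hk, hX0]
  · simp only [Nat.sub_self]
    exact hX0
  · intro i hi
    refine ⟨a (q - p - (i + 1)), ha _, ?_⟩
    have := hrec (q - p - (i + 1))
    rwa [show q - p - (i + 1) + 1 = q - p - i by omega] at this
end

section
/- Let (N, B, L) be a Hadamard triple in ℝ with #B < N, and let μ_{N,B} be the self-similar measure associated with (N,B), i.e., the unique Borel probability measure μ on ℝ satisfying μ = (1/#B) ∑_{b∈B} μ ∘ τ_b^{-1} where τ_b(x) = (x+b)/N. Then for any integers p_1, p_2, …, p_k ≥ 2 with gcd(p_1 p_2 ⋯ p_k, N) = 1, there exists a set Λ ⊂ ℝ such that for every tuple (n_1, n_2, …, n_k) ∈ ℕ_0^k, the set p_1^{n_1} p_2^{n_2} ⋯ p_k^{n_k} · Λ is a spectrum of μ_{N,B}. -/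
open MeasureTheory ENNReal

/-- The exponential function `e_λ(x) = e^{2πiλx}`. -/
noncomputable def expFun (l : ℝ) : ℝ → ℂ :=
  fun x => Complex.exp (2 * Real.pi * Complex.I * (l : ℂ) * (x : ℂ))

/-- `Λ` is a spectrum of `μ`: the family `{e^{2πiλx} : λ ∈ Λ}` forms an
orthonormal basis of `L²(μ)`. -/
def IsSpectrum (μ : Measure ℝ) (Λ : Set ℝ) : Prop :=
  ∃ F : Λ → Lp ℂ 2 μ,
    (∀ l : Λ, (F l : ℝ → ℂ) =ᵐ[μ] expFun (l : ℝ)) ∧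
    Orthonormal ℂ F ∧
    (Submodule.span ℂ (Set.range F)).topologicalClosure = ⊤

open Complex in
noncomputable def ee (t : ℝ) : ℂ := Complex.exp (((2 * Real.pi * t : ℝ) : ℂ) * Complex.I)

lemma expFun_eq (l x : ℝ) : expFun l x = ee (l * x) := by
  unfold expFun ee; congr 1; push_cast; ring

lemma ee_add (s t : ℝ) : ee (s + t) = ee s * ee t := by
  unfold ee; rw [← Complex.exp_add]; congr 1; push_cast; ring

lemma ee_zero : ee 0 = 1 := by simp [ee]

lemma norm_ee (t : ℝ) : ‖ee t‖ = 1 := by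
  unfold ee; exact Complex.norm_exp_ofReal_mul_I _

lemma ee_int (k : ℤ) : ee k = 1 := by
  unfold ee; rw [Complex.exp_eq_one_iff]; exact ⟨k, by push_cast; ring⟩

lemma conj_ee (t : ℝ) : (starRingEnd ℂ) (ee t) = ee (-t) := by
  unfold ee; rw [← Complex.exp_conj]; congr 1; rw [map_mul, Complex.conj_ofReal, Complex.conj_I]; push_cast; ring

lemma continuous_ee : Continuous ee := by unfold ee; fun_prop

lemma analytic_ee (c : ℝ) : AnalyticOnNhd ℝ (fun t => ee (c * t)) Set.univ := by
  intro t _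
  unfold ee
  have h1 : AnalyticAt ℝ (fun t : ℝ => (((2 * Real.pi * (c * t) : ℝ) : ℂ) * Complex.I)) t := by
    have : AnalyticAt ℝ (fun t : ℝ => (2 * Real.pi * (c * t) : ℝ)) t := by fun_prop
    have h2 : AnalyticAt ℝ (fun t : ℝ => ((2 * Real.pi * (c * t) : ℝ) : ℂ)) t :=
      AnalyticAt.fun_comp (g := fun s : ℝ => (s : ℂ)) (Complex.ofRealCLM.analyticAt _) this
    exact h2.mul analyticAt_const
  exact AnalyticAt.fun_comp (g := Complex.exp) (analyticAt_cexp.restrictScalars (𝕜 := ℝ)) h1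

noncomputable def mB (B : Finset ℤ) (x : ℝ) : ℂ := (B.card : ℂ)⁻¹ * ∑ b ∈ B, ee ((b : ℝ) * x)

noncomputable def PP (N : ℕ) (B : Finset ℤ) (n : ℕ) (x : ℝ) : ℂ :=
  ∏ j ∈ Finset.range n, mB B (x / (N : ℝ) ^ (j + 1))

lemma mB_periodic (B : Finset ℤ) (x : ℝ) (k : ℤ) : mB B (x + k) = mB B x := by
  unfold mB; congr 1; refine Finset.sum_congr rfl fun b _ => ?_
  rw [mul_add, ee_add]
  have : ee ((b : ℝ) * k) = 1 := by exact_mod_cast ee_int (b * k)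
  rw [this, mul_one]

lemma mB_zero (B : Finset ℤ) (hB : 2 ≤ B.card) : mB B 0 = 1 := by
  unfold mB; simp [ee_zero]
  rw [inv_mul_cancel₀]
  have : B.card ≠ 0 := by omega
  exact_mod_cast this

lemma analytic_mB (B : Finset ℤ) (c : ℝ) : AnalyticOnNhd ℝ (fun t => mB B (c * t)) Set.univ := by
  unfold mB
  refine AnalyticOnNhd.mul analyticOnNhd_const ?_
  refine Finset.analyticOnNhd_fun_sum _ fun b _ => ?_
  have := analytic_ee (b * c)
  simpa [mul_assoc] using this

lemma PP_zero (N : ℕ) (B : Finset ℤ) (hB : 2 ≤ B.card) (n : ℕ) : PP N B n 0 = 1 := by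
  unfold PP; simp [mB_zero B hB]

lemma analytic_PP (N : ℕ) (B : Finset ℤ) (n : ℕ) (c : ℝ) :
    AnalyticOnNhd ℝ (fun t => PP N B n (c * t)) Set.univ := by
  unfold PP
  refine Finset.analyticOnNhd_fun_prod _ fun j _ => ?_
  have := analytic_mB B (c / (N : ℝ) ^ (j + 1))
  simpa only [div_mul_eq_mul_div] using this

lemma PP_succ (N : ℕ) (B : Finset ℤ) (n : ℕ) (x : ℝ) :
    PP N B (n + 1) x = PP N B n x * mB B (x / (N : ℝ) ^ (n + 1)) := by
  unfold PP; rw [Finset.prod_range_succ]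

lemma PP_periodic (N : ℕ) (hN : 2 ≤ N) (B : Finset ℤ) (n : ℕ) (x : ℝ) (k : ℤ) :
    PP N B n (x + (N : ℝ) ^ n * k) = PP N B n x := by
  unfold PP
  refine Finset.prod_congr rfl fun j hj => ?_
  have hj' : j + 1 ≤ n := by simpa using hj
  have hN0 : (N : ℝ) ≠ 0 := by positivity
  obtain ⟨r, rfl⟩ := Nat.exists_eq_add_of_le hj'
  have : (x + (N : ℝ) ^ (j + 1 + r) * k) / (N : ℝ) ^ (j + 1)
      = x / (N : ℝ) ^ (j + 1) + (((N : ℤ) ^ r * k : ℤ) : ℝ) := by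
    push_cast; rw [pow_add]; field_simp
  rw [this, mB_periodic]

/-- generic finite Parseval -/
lemma parseval_gen {ι κ : Type} [Fintype ι] [Fintype κ] [Nonempty ι]
    (hc : Fintype.card κ = Fintype.card ι) (x : ι → ℝ) (y : κ → ℝ)
    (h : ∀ k k', k ≠ k' → ∑ i, ee (x i * (y k - y k')) = 0) (t : ℝ) :
    ∑ k, ‖(Fintype.card ι : ℂ)⁻¹ * ∑ i, ee (x i * (t + y k))‖ ^ 2 = 1 := by
  classical
  set c : ℝ := (Real.sqrt (Fintype.card ι))⁻¹ with hcdef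
  have hpos : (0 : ℝ) < Fintype.card ι := by exact_mod_cast Fintype.card_pos
  have hc2 : c * c = (Fintype.card ι : ℝ)⁻¹ := by
    rw [hcdef, ← mul_inv, Real.mul_self_sqrt hpos.le]
  have hc2' : (c : ℂ) * c = (Fintype.card ι : ℂ)⁻¹ := by rw [← Complex.ofReal_mul, hc2]; push_cast; rfl
  let v : κ → EuclideanSpace ℂ ι := fun k => WithLp.toLp 2 fun i => (c : ℂ) * ee (-(x i * y k))
  let w : EuclideanSpace ℂ ι := WithLp.toLp 2 fun i => (c : ℂ) * ee (x i * t)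
  have hin : ∀ (k : κ) (s : ℝ), inner ℂ (v k) (WithLp.toLp 2 fun i => (c : ℂ) * ee (x i * s))
      = (Fintype.card ι : ℂ)⁻¹ * ∑ i, ee (x i * (s + y k)) := by
    intro k s
    simp only [v, PiLp.inner_apply, RCLike.inner_apply, map_mul, conj_ee, Complex.conj_ofReal]
    rw [Finset.mul_sum]
    refine Finset.sum_congr rfl fun i _ => ?_
    rw [← hc2', mul_add, ee_add, neg_neg]; ring
  have hv : Orthonormal ℂ v := by
    rw [orthonormal_iff_ite]
    intro k k'
    have : v k' = WithLp.toLp 2 fun i => (c : ℂ) * ee (x i * (-y k')) := by simp [v]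
    rw [this, hin]
    split_ifs with hk
    · subst hk
      simp [ee_zero]
    · have := h k k' hk
      simp only [neg_add_eq_sub, this, mul_zero]
  have hne : Nonempty κ := Fintype.card_pos_iff.mp (hc ▸ Fintype.card_pos)
  have hfr : Fintype.card κ = Module.finrank ℂ (EuclideanSpace ℂ ι) := by simp [hc]
  have hsp := (basisOfOrthonormalOfCardEqFinrank hv hfr).span_eq
  rw [coe_basisOfOrthonormalOfCardEqFinrank] at hsp
  let b := OrthonormalBasis.mk hv hsp.ge
  have := b.sum_sq_norm_inner_right w
  have hb : ∀ k, b k = v k := fun k => by simp [b]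
  simp only [hb, w, hin] at this
  rw [this, EuclideanSpace.norm_sq_eq]
  simp [norm_ee]
  rw [sq, hc2, mul_inv_cancel₀ hpos.ne']

lemma PP_repr (N : ℕ) (B : Finset ℤ) (n : ℕ) :
    ∃ (ι : Type) (_ : Fintype ι) (x : ι → ℝ), Fintype.card ι = B.card ^ n ∧
      ∀ t, PP N B n t = (Fintype.card ι : ℂ)⁻¹ * ∑ i, ee (x i * t) := by
  induction n with
  | zero => exact ⟨Unit, inferInstance, fun _ => 0, by simp, fun t => by simp [PP, ee_zero]⟩
  | succ n ih =>
    obtain ⟨ι, hι, x, hc, hx⟩ := ih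
    refine ⟨ι × B, inferInstance, fun p => x p.1 + (p.2 : ℤ) / (N : ℝ) ^ (n + 1), ?_, ?_⟩
    · simp [hc, pow_succ]
    · intro t
      rw [PP_succ, hx, mB, Fintype.sum_prod_type, ← Finset.sum_coe_sort B]
      simp only [Fintype.card_prod, Fintype.card_coe, Nat.cast_mul, mul_inv]
      have : ∀ (i : ι) (b : B), ee ((x i + ((b : ℤ) : ℝ) / (N : ℝ) ^ (n + 1)) * t)
          = ee (x i * t) * ee (((b : ℤ) : ℝ) * (t / (N : ℝ) ^ (n + 1))) := by
        intro i b; rw [← ee_add]; congr 1; ring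
      simp only [this, ← Finset.mul_sum, ← Finset.sum_mul]
      ring

lemma PP_parseval (N : ℕ) (B : Finset ℤ) (hB : 2 ≤ B.card) (n : ℕ) (S : Finset ℤ) (d : ℕ)
    (hc : S.card = B.card ^ n)
    (h : ∀ l ∈ S, ∀ l' ∈ S, l ≠ l' → PP N B n (d * ((l : ℝ) - l')) = 0) (t : ℝ) :
    ∑ l ∈ S, ‖PP N B n (t + d * l)‖ ^ 2 = 1 := by
  obtain ⟨ι, hι, x, hcι, hx⟩ := PP_repr N B n
  have hcpos : 0 < Fintype.card ι := by rw [hcι]; positivity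
  have : Nonempty ι := Fintype.card_pos_iff.mp hcpos
  have := parseval_gen (ι := ι) (κ := S) (by simp [hc, hcι]) x (fun l => d * ((l : ℤ) : ℝ)) ?_ t
  · rw [← Finset.sum_coe_sort S]
    simpa only [hx] using this
  · intro k k' hk
    have := h k k.2 k' k'.2 (fun e => hk (Subtype.ext e))
    rw [hx, mul_eq_zero] at this
    rcases this with h0 | h0
    · simp at h0
    · simpa only [mul_sub] using h0

lemma galois (N : ℕ) (hN : 2 ≤ N) (B : Finset ℤ) (l : ℤ) (d : ℕ) (hd : d.Coprime N)
    (h : ∑ b ∈ B, ee ((b : ℝ) * (l / N)) = 0) :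
    ∑ b ∈ B, ee ((b : ℝ) * (d * l / N)) = 0 := by
  have hN0 : (N : ℝ) ≠ 0 := by positivity
  have hNC : (N : ℂ) ≠ 0 := by exact_mod_cast hN0
  set z := Complex.exp (2 * Real.pi * Complex.I / N) with hz
  have hprim : IsPrimitiveRoot z N := Complex.isPrimitiveRoot_exp N (by omega)
  let e : ℤ → ℕ := fun b => ((b * l) % N).toNat
  have he : ∀ (b : ℤ) (c : ℕ), ee ((b : ℝ) * (c * l / N)) = (z ^ c) ^ (e b) := by
    intro b c
    have h1 : ((e b : ℕ) : ℤ) = (b * l) % N := Int.toNat_of_nonneg (Int.emod_nonneg _ (by omega))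
    have h2 : b * l = e b + N * ((b * l) / N) := by
      rw [h1]; exact (Int.emod_add_mul_ediv _ _).symm
    have h3 : (b : ℝ) * l = e b + N * ((b * l / N : ℤ) : ℝ) := by exact_mod_cast h2
    have h4 : (b : ℝ) * (c * l / N) = c * e b / N + ((c * (b * l / N) : ℤ) : ℝ) := by
      have : (b : ℝ) * (c * l / N) = c * (b * l) / N := by ring
      rw [this, h3]; push_cast; field_simp
    rw [h4, ee_add, ee_int, mul_one, ← pow_mul, hz, ← Complex.exp_nat_mul]
    unfold ee; congr 1; push_cast; field_simp
  let f : Polynomial ℤ := ∑ b ∈ B, Polynomial.X ^ (e b)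
  have hf : ∀ w : ℂ, Polynomial.aeval w f = ∑ b ∈ B, w ^ (e b) := by
    intro w; simp [f]
  have h0 : Polynomial.aeval z f = 0 := by
    rw [hf, ← h]
    refine Finset.sum_congr rfl fun b _ => ?_
    have := he b 1
    simp at this
    exact this.symm
  have hdvd := minpoly.isIntegrallyClosed_dvd (hprim.isIntegral (by omega)) h0
  rw [hprim.minpoly_eq_pow_coprime hd] at hdvd
  obtain ⟨g, hg⟩ := hdvd
  have : Polynomial.aeval (z ^ d) f = 0 := by
    rw [hg, map_mul, minpoly.aeval, zero_mul]
  rw [hf] at this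
  rw [← this]
  exact Finset.sum_congr rfl fun b _ => he b d

lemma phi_iter (N : ℕ) (B : Finset ℤ) (φ : ℝ → ℂ)
    (hφ : ∀ t, φ t = mB B (t / N) * φ (t / N)) (n : ℕ) (t : ℝ) :
    φ t = PP N B n t * φ (t / (N : ℝ) ^ n) := by
  induction n with
  | zero => simp [PP]
  | succ n ih =>
    rw [PP_succ, ih, hφ (t / (N : ℝ) ^ n), div_div, ← pow_succ]; ring

lemma had (N : ℕ) (B L : Finset ℤ) (h : IsHadamardTriple N B L) (d : ℕ) (hd : d.Coprime N)
    (l l' : ℤ) (hl : l ∈ L) (hl' : l' ∈ L) (hne : l ≠ l') :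
    mB B (d * ((l : ℝ) - l') / N) = 0 := by
  obtain ⟨hN, hB, -, hz⟩ := h
  have h1 := hz l hl l' hl' hne
  have h2 : ∑ b ∈ B, ee ((b : ℝ) * (((l - l' : ℤ) : ℝ) / N)) = 0 := by
    rw [← h1]
    refine Finset.sum_congr rfl fun b _ => ?_
    unfold ee; congr 1; push_cast; ring
  have h3 := galois N hN B (l - l') d hd h2
  unfold mB
  push_cast at h3
  rw [h3, mul_zero]

lemma one_child (N : ℕ) (B L : Finset ℤ) (h : IsHadamardTriple N B L) (d : ℕ) (hd : d.Coprime N)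
    (x : ℝ) : ∃ l ∈ L, mB B (d * ((x + l) / N)) ≠ 0 := by
  have hB := h.2.1
  have := PP_parseval N B hB 1 L d (by rw [pow_one]; exact h.2.2.1.symm)
    (fun l hl l' hl' hne => by
      have := had N B L h d hd l l' hl hl' hne
      simpa [PP] using this) (d * x)
  by_contra! hcon
  rw [Finset.sum_eq_zero] at this
  · norm_num at this
  · intro l hl
    have h2 := hcon l hl
    have e : ((d : ℝ) * x + d * l) / (N : ℝ) = d * ((x + l) / N) := by ring
    simp [PP, e, h2]

lemma two_children (N : ℕ) (B L : Finset ℤ) (h : IsHadamardTriple N B L) (hBN : B.card < N)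
    (d : ℕ) (hd : d.Coprime N) (x : ℝ) :
    ∃ l l' : ℤ, ¬ ((N : ℤ) ∣ l - l') ∧ mB B (d * ((x + l) / N)) ≠ 0 ∧
      mB B (d * ((x + l') / N)) ≠ 0 := by
  by_contra! hcon
  have hN := h.1
  have : NeZero N := ⟨by omega⟩
  obtain ⟨r, -, hr⟩ := one_child N B L h d hd x
  have hsurj : Function.Surjective (fun l : L => ((l : ℤ) : ZMod N)) := by
    intro a
    obtain ⟨a', ha'⟩ := ZMod.intCast_surjective ((r : ZMod N) - a)
    obtain ⟨l, hl, hm⟩ := one_child N B L h d hd (x + a')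
    refine ⟨⟨l, hl⟩, ?_⟩
    have h1 : (N : ℤ) ∣ r - (a' + l) := by
      by_contra hdv
      refine hm ?_
      have h5 := hcon _ _ hdv hr
      push_cast at h5
      rwa [← add_assoc] at h5
    have h2 := (ZMod.intCast_zmod_eq_zero_iff_dvd _ N).2 h1
    push_cast at h2
    rw [ha'] at h2
    show ((l : ℤ) : ZMod N) = a
    linear_combination -h2
  have h3 := Fintype.card_le_of_surjective _ hsurj
  rw [ZMod.card, Fintype.card_coe, ← h.2.2.1] at h3
  omega

lemma nonvanish (N : ℕ) (B L : Finset ℤ) (h : IsHadamardTriple N B L) (hBN : B.card < N)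
    (φ : ℝ → ℂ) (hc : Continuous φ) (h0 : φ 0 = 1)
    (hφ : ∀ t, φ t = mB B (t / N) * φ (t / N)) (d : ℕ) (hd : d.Coprime N) (x : ℝ) :
    ∃ k : ℤ, φ (d * (x + k)) ≠ 0 := by
  have hN := h.1
  have hN0 : (N : ℝ) ≠ 0 := by positivity
  let Z : Set ℝ := {x | x ∈ Set.Icc (0 : ℝ) 1 ∧ x < 1 ∧ ∀ k : ℤ, φ (d * (x + k)) = 0}
  have hfract : ∀ y : ℝ, (∀ k : ℤ, φ (d * (y + k)) = 0) → Int.fract y ∈ Z := by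
    intro y hy
    refine ⟨⟨Int.fract_nonneg _, (Int.fract_lt_one _).le⟩, Int.fract_lt_one _, fun k => ?_⟩
    have := hy (k - ⌊y⌋)
    rw [← this, Int.fract]; push_cast; congr 2; ring
  have hZfin : Z.Finite := by
    have hev : ∀ᶠ t in nhds (0 : ℝ), φ t ≠ 0 :=
      hc.continuousAt.eventually_ne (by rw [h0]; exact one_ne_zero)
    obtain ⟨r, hr, hball⟩ := Metric.eventually_nhds_iff.1 hev
    obtain ⟨J, hJ⟩ : ∃ J : ℕ, (d : ℝ) / (N : ℝ) ^ J < r := by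
      have h1 : Filter.Tendsto (fun J : ℕ => (d : ℝ) / (N : ℝ) ^ J) Filter.atTop (nhds 0) :=
        Filter.Tendsto.const_div_atTop
          (tendsto_pow_atTop_atTop_of_one_lt (by exact_mod_cast (by omega : 1 < N))) _
      exact (h1.eventually (gt_mem_nhds hr)).exists
    have han := (analytic_PP N B J d).mono (Set.subset_univ (Set.Icc (0 : ℝ) 1))
    rcases han.eqOn_zero_or_eventually_ne_zero_of_preconnected isPreconnected_Icc with hz | hz
    · have := hz (Set.left_mem_Icc.2 zero_le_one)
      simp [PP_zero N B h.2.1] at this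
    · have hfin := (isCompact_Icc (a := (0 : ℝ)) (b := 1)).finite_sdiff_of_mem_codiscreteWithin hz
      refine hfin.subset ?_
      rintro y ⟨hy, -, hy2⟩
      refine ⟨hy, ?_⟩
      intro hne
      have h1 := hy2 0
      rw [Int.cast_zero, add_zero, phi_iter N B φ hφ J] at h1
      rcases mul_eq_zero.1 h1 with h2 | h2
      · exact hne h2
      · refine hball ?_ h2
        rw [Real.dist_eq, sub_zero, abs_of_nonneg (by have := hy.1; positivity)]
        refine lt_of_le_of_lt ?_ hJ
        gcongr
        have := hy.2
        have hd0 : (0 : ℝ) ≤ d := by positivity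
        nlinarith
  have hch : ∀ z : Z, ∃ f : Bool → Z, Function.Injective f ∧
      ∀ b, Int.fract (N * (f b : ℝ)) = z := by
    rintro ⟨z, hz⟩
    have key : ∀ l : ℤ, mB B (d * ((z + l) / N)) ≠ 0 → Int.fract ((z + l) / N) ∈ Z := by
      intro l hl
      refine hfract _ fun k => ?_
      have h1 := hz.2.2 (l + N * k)
      rw [hφ] at h1
      have e : (d : ℝ) * (z + ((l + N * k : ℤ) : ℝ)) / N = d * ((z + l) / N + k) := by
        push_cast; field_simp; ring
      rw [e] at h1
      rcases mul_eq_zero.1 h1 with h2 | h2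
      · exfalso; apply hl
        rw [← h2, mul_add]
        have := mB_periodic B (d * ((z + l) / N)) (d * k)
        push_cast at this
        exact this.symm
      · exact h2
    have key2 : ∀ l : ℤ, Int.fract (N * Int.fract ((z + l) / N)) = z := by
      intro l
      rw [Int.fract_eq_iff]
      refine ⟨hz.1.1, hz.2.1, l - N * ⌊(z + l) / N⌋, ?_⟩
      rw [Int.fract]; push_cast; field_simp; ring
    obtain ⟨l, l', hne, hl, hl'⟩ := two_children N B L h hBN d hd z
    refine ⟨fun b => if b then ⟨_, key l hl⟩ else ⟨_, key l' hl'⟩, ?_, ?_⟩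
    · have hdiff : Int.fract ((z + l) / N) ≠ Int.fract ((z + l') / N) := by
        intro he
        obtain ⟨k, hk⟩ := Int.fract_eq_fract.1 he
        apply hne
        refine ⟨k, ?_⟩
        field_simp at hk
        have : (l : ℝ) - l' = N * k := by linarith
        exact_mod_cast this
      intro a b hab
      cases a <;> cases b <;> simp at hab ⊢
      · exact hdiff hab.symm
      · exact hdiff hab
    · intro b; cases b <;> simp [key2]
  choose f hf1 hf2 using hch
  have : Finite Z := hZfin
  have hinj : Function.Injective (fun p : Z × Bool => f p.1 p.2) := by
    rintro ⟨a, b⟩ ⟨a', b'⟩ hab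
    simp only at hab
    have : a = a' := by
      apply Subtype.ext; rw [← hf2 a b, ← hf2 a' b', hab]
    subst this
    rw [hf1 a hab]
  have hcard := Nat.card_le_card_of_injective _ hinj
  rw [Nat.card_prod] at hcard
  simp at hcard
  have hempty : Z = ∅ := by
    by_contra hne
    have : Nonempty Z := Set.nonempty_iff_ne_empty'.2 hne
    have : 0 < Nat.card Z := Nat.card_pos
    simp at this
    omega
  by_contra! hcon
  have := hfract x hcon
  rw [hempty] at this
  exact this

lemma equipos (N : ℕ) (B L : Finset ℤ) (h : IsHadamardTriple N B L) (hBN : B.card < N)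
    (φ : ℝ → ℂ) (hc : Continuous φ) (h0 : φ 0 = 1)
    (hφ : ∀ t, φ t = mB B (t / N) * φ (t / N)) (d : ℕ) (hd : d.Coprime N) :
    ∃ ε > 0, ∃ δ > 0, (∀ y, |y| ≤ δ → ε ≤ ‖φ y‖) ∧
      ∀ x : ℝ, ∃ k : ℤ, ∀ y, |y| ≤ δ → ε ≤ ‖φ (d * (x + k) + y)‖ := by
  have loc : ∀ t, φ t ≠ 0 → ∃ ε > 0, ∃ δ > 0, ∀ y, |y| ≤ δ → ε ≤ ‖φ (t + y)‖ := by
    intro t ht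
    have hp : 0 < ‖φ t‖ := norm_pos_iff.2 ht
    have hev : ∀ᶠ s in nhds t, ‖φ t‖ / 2 < ‖φ s‖ :=
      hc.norm.continuousAt.eventually (lt_mem_nhds (by linarith))
    obtain ⟨r, hr, hball⟩ := Metric.eventually_nhds_iff.1 hev
    refine ⟨‖φ t‖ / 2, by positivity, r / 2, by positivity, fun y hy => (hball ?_).le⟩
    rw [Real.dist_eq, add_sub_cancel_left]; linarith
  obtain ⟨ε₁, hε₁, δ₁, hδ₁, h1⟩ := loc 0 (by rw [h0]; exact one_ne_zero)
  have h2 : ∃ ε > 0, ∃ δ > 0, ∀ x ∈ Set.Icc (0 : ℝ) 1, ∃ k : ℤ, ∀ y, |y| ≤ δ →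
      ε ≤ ‖φ (d * (x + k) + y)‖ := by
    refine isCompact_Icc.induction_on (p := fun s : Set ℝ => ∃ ε > 0, ∃ δ > 0, ∀ x ∈ s, ∃ k : ℤ,
      ∀ y, |y| ≤ δ → ε ≤ ‖φ (d * (x + k) + y)‖) ?_ ?_ ?_ ?_
    · exact ⟨1, one_pos, 1, one_pos, by simp⟩
    · rintro s t hst ⟨ε, hε, δ, hδ, H⟩
      exact ⟨ε, hε, δ, hδ, fun x hx => H x (hst hx)⟩
    · rintro s t ⟨ε, hε, δ, hδ, H⟩ ⟨ε', hε', δ', hδ', H'⟩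
      refine ⟨min ε ε', lt_min hε hε', min δ δ', lt_min hδ hδ', ?_⟩
      rintro x (hx | hx)
      · obtain ⟨k, hk⟩ := H x hx
        exact ⟨k, fun y hy => (min_le_left _ _).trans (hk y (hy.trans (min_le_left _ _)))⟩
      · obtain ⟨k, hk⟩ := H' x hx
        exact ⟨k, fun y hy => (min_le_right _ _).trans (hk y (hy.trans (min_le_right _ _)))⟩
    · intro x _
      obtain ⟨k, hk⟩ := nonvanish N B L h hBN φ hc h0 hφ d hd x
      obtain ⟨ε, hε, δ, hδ, H⟩ := loc _ hk
      have hd1 : (0 : ℝ) < d + 1 := by positivity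
      refine ⟨Metric.ball x (δ / 2 / (d + 1)),
        mem_nhdsWithin_of_mem_nhds (Metric.ball_mem_nhds _ (by positivity)),
        ε, hε, δ / 2, by positivity, ?_⟩
      intro x' hx'
      refine ⟨k, fun y hy => ?_⟩
      have := H (d * (x' - x) + y) ?_
      · convert this using 3; ring
      · rw [Metric.mem_ball, Real.dist_eq, lt_div_iff₀ hd1] at hx'
        refine (abs_add_le _ _).trans ?_
        rw [abs_mul, Nat.abs_cast]
        nlinarith [abs_nonneg (x' - x)]
  obtain ⟨ε₂, hε₂, δ₂, hδ₂, H⟩ := h2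
  refine ⟨min ε₁ ε₂, lt_min hε₁ hε₂, min δ₁ δ₂, lt_min hδ₁ hδ₂, ?_, ?_⟩
  · intro y hy
    have := h1 y (hy.trans (min_le_left _ _))
    rw [zero_add] at this
    exact (min_le_left _ _).trans this
  · intro x
    obtain ⟨k, hk⟩ := H (Int.fract x) ⟨Int.fract_nonneg _, (Int.fract_lt_one _).le⟩
    refine ⟨k - ⌊x⌋, fun y hy => ?_⟩
    have := (min_le_right ε₁ ε₂).trans (hk y (hy.trans (min_le_right _ _)))
    have e : (d : ℝ) * (x + ((k - ⌊x⌋ : ℤ) : ℝ)) + y = d * (Int.fract x + k) + y := by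
      rw [Int.fract]; push_cast; ring
    rw [e]; exact this

def Good (N : ℕ) (B : Finset ℤ) (n : ℕ) (S : Finset ℤ) : Prop :=
  S.card = B.card ^ n ∧ ∀ d : ℕ, d.Coprime N → ∀ l ∈ S, ∀ l' ∈ S, l ≠ l' →
    PP N B n (d * ((l : ℝ) - l')) = 0

lemma good_image (N : ℕ) (B : Finset ℤ) (hB : 2 ≤ B.card) (n : ℕ) {α : Type} (T : Finset α)
    (g : α → ℤ) (hT : T.card = B.card ^ n)
    (hg : ∀ d : ℕ, d.Coprime N → ∀ a ∈ T, ∀ a' ∈ T, a ≠ a' →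
      PP N B n (d * ((g a : ℝ) - g a')) = 0) : Good N B n (T.image g) := by
  classical
  constructor
  · rw [Finset.card_image_of_injOn, hT]
    intro a ha a' ha' he
    by_contra hne
    have := hg 1 (Nat.coprime_one_left N) a ha a' ha' hne
    rw [he, sub_self, mul_zero, PP_zero N B hB] at this
    exact one_ne_zero this
  · intro d hd l hl l' hl' hne
    obtain ⟨a, ha, rfl⟩ := Finset.mem_image.1 hl
    obtain ⟨a', ha', rfl⟩ := Finset.mem_image.1 hl'
    exact hg d hd a ha a' ha' (fun e => hne (by rw [e]))

lemma good_ext (N : ℕ) (B L : Finset ℤ) (h : IsHadamardTriple N B L) (n : ℕ) (S : Finset ℤ)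
    (hS : Good N B n S) : ∃ S', S ⊆ S' ∧ Good N B (n + 1) S' := by
  have hN := h.1
  have hN0 : (N : ℝ) ≠ 0 := by positivity
  have hLc : 0 < L.card := by have := h.2.1; have := h.2.2.1; omega
  obtain ⟨l0, hl0⟩ := Finset.card_pos.1 hLc
  refine ⟨(S ×ˢ L).image (fun p => p.1 + (N : ℤ) ^ n * (p.2 - l0)), ?_, ?_⟩
  · intro l hl
    exact Finset.mem_image.2 ⟨(l, l0), Finset.mem_product.2 ⟨hl, hl0⟩, by simp⟩
  · refine good_image N B h.2.1 _ _ _ ?_ ?_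
    · rw [Finset.card_product, hS.1, pow_succ, h.2.2.1]
    · rintro d hd ⟨s, c⟩ hsc ⟨s', c'⟩ hsc' hne
      rw [Finset.mem_product] at hsc hsc'
      rw [PP_succ]
      by_cases hss : s = s'
      · subst hss
        have hcc : c ≠ c' := fun e => hne (by rw [e])
        have := had N B L h d hd c c' hsc.2 hsc'.2 hcc
        have e : (d : ℝ) * (((s + (N : ℤ) ^ n * (c - l0) : ℤ) : ℝ)
            - ((s + (N : ℤ) ^ n * (c' - l0) : ℤ) : ℝ)) / (N : ℝ) ^ (n + 1)
            = d * ((c : ℝ) - c') / N := by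
          push_cast; rw [pow_succ]; field_simp; ring
        simp only [e, this, mul_zero]
      · have := hS.2 d hd s hsc.1 s' hsc'.1 hss
        have e : (d : ℝ) * (((s + (N : ℤ) ^ n * (c - l0) : ℤ) : ℝ)
            - ((s' + (N : ℤ) ^ n * (c' - l0) : ℤ) : ℝ))
            = d * ((s : ℝ) - s') + (N : ℝ) ^ n * ((d * (c - c') : ℤ) : ℝ) := by
          push_cast; ring
        simp only [e, PP_periodic N hN, this, zero_mul]

lemma good_ext_r (N : ℕ) (B L : Finset ℤ) (h : IsHadamardTriple N B L) (n : ℕ) (S : Finset ℤ)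
    (hS : Good N B n S) (r : ℕ) : ∃ S', S ⊆ S' ∧ Good N B (n + r) S' := by
  induction r with
  | zero => exact ⟨S, subset_rfl, hS⟩
  | succ r ih =>
    obtain ⟨S', h1, h2⟩ := ih
    obtain ⟨S'', h3, h4⟩ := good_ext N B L h _ _ h2
    exact ⟨S'', h1.trans h3, h4⟩

lemma good_adj (N : ℕ) (hN : 2 ≤ N) (B : Finset ℤ) (hB : 2 ≤ B.card) (n : ℕ) (S : Finset ℤ)
    (hS : Good N B n S) (k : ℤ → ℤ) : Good N B n (S.image (fun l => l + (N : ℤ) ^ n * k l)) := by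
  refine good_image N B hB _ _ _ hS.1 ?_
  intro d hd a ha a' ha' hne
  rw [← hS.2 d hd a ha a' ha' hne, ← PP_periodic N hN B n (d * ((a : ℝ) - a')) (d * (k a - k a'))]
  congr 1; push_cast; ring

lemma step (N : ℕ) (B L : Finset ℤ) (h : IsHadamardTriple N B L) (φ : ℝ → ℂ) (d : ℕ)
    (ε δ : ℝ) (hδ : 0 < δ) (h1 : ∀ y, |y| ≤ δ → ε ≤ ‖φ y‖)
    (h2 : ∀ x : ℝ, ∃ k : ℤ, ∀ y, |y| ≤ δ → ε ≤ ‖φ (d * (x + k) + y)‖)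
    (n : ℕ) (S : Finset ℤ) (hS : Good N B n S) :
    ∃ n' S', n < n' ∧ S ⊆ S' ∧ Good N B n' S' ∧
      ∀ l ∈ S', ∀ y, |y| ≤ δ / 2 → ε ≤ ‖φ (d * l / (N : ℝ) ^ n' + y)‖ := by
  classical
  have hN := h.1
  have hN0 : (N : ℝ) ≠ 0 := by positivity
  have hsmall : ∀ᶠ r : ℕ in Filter.atTop, ∀ l ∈ S, |(d : ℝ) * l / (N : ℝ) ^ r| ≤ δ / 2 := by
    rw [Filter.eventually_all_finset]
    intro l _
    have h1 : Filter.Tendsto (fun J : ℕ => |(d : ℝ) * l / (N : ℝ) ^ J|) Filter.atTop (nhds 0) := by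
      have := (Filter.Tendsto.const_div_atTop
          (tendsto_pow_atTop_atTop_of_one_lt
            (by exact_mod_cast (by omega : 1 < N) : (1 : ℝ) < N)) ((d : ℝ) * l)).abs
      simpa using this
    exact (h1.eventually (gt_mem_nhds (half_pos hδ))).mono fun _ h => h.le
  obtain ⟨n', hn', hgt⟩ := (hsmall.and (Filter.eventually_gt_atTop n)).exists
  obtain ⟨r, rfl⟩ := Nat.exists_eq_add_of_le hgt.le
  obtain ⟨T, hST, hT⟩ := good_ext_r N B L h n S hS r
  choose κ hκ using h2
  let k : ℤ → ℤ := fun l => if l ∈ S then 0 else κ (l / (N : ℝ) ^ (n + r))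
  refine ⟨n + r, _, hgt, ?_, good_adj N hN B h.2.1 _ T hT k, ?_⟩
  · intro l hl
    exact Finset.mem_image.2 ⟨l, hST hl, by simp [k, hl]⟩
  · intro l' hl' y hy
    obtain ⟨l, hl, rfl⟩ := Finset.mem_image.1 hl'
    by_cases hlS : l ∈ S
    · simp only [k, hlS, if_true, mul_zero, add_zero]
      apply h1
      have := hn' l hlS
      exact (abs_add_le _ _).trans (by linarith)
    · simp only [k, hlS, if_false]
      have := hκ (l / (N : ℝ) ^ (n + r)) y (by linarith)
      have e : (d : ℝ) * ((l + (N : ℤ) ^ (n + r) * κ (l / (N : ℝ) ^ (n + r)) : ℤ) : ℝ)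
          / (N : ℝ) ^ (n + r)
          = d * (l / (N : ℝ) ^ (n + r) + κ (l / (N : ℝ) ^ (n + r))) := by
        push_cast; field_simp
      rw [e]; exact this

/-- the construction -/
lemma construct (N : ℕ) (B L : Finset ℤ) (h : IsHadamardTriple N B L) (hBN : B.card < N)
    (φ : ℝ → ℂ) (hc : Continuous φ) (h0 : φ 0 = 1)
    (hφ : ∀ t, φ t = mB B (t / N) * φ (t / N)) :
    ∃ (n : ℕ → ℕ) (S : ℕ → Finset ℤ), StrictMono n ∧ Monotone S ∧ (∀ i, Good N B (n i) (S i)) ∧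
      ∀ d : ℕ, d.Coprime N → ∃ ε > 0, ∃ δ > 0, ∃ u : ℕ → ℕ, Filter.Tendsto u Filter.atTop Filter.atTop ∧
        ∀ i, ∀ l ∈ S (u i), ∀ y, |y| ≤ δ → ε ≤ ‖φ (d * l / (N : ℝ) ^ (n (u i)) + y)‖ := by
  classical
  have hN := h.1
  have hE : ∀ d : ℕ, ∃ ε > 0, ∃ δ > 0, d.Coprime N → (∀ y, |y| ≤ δ → ε ≤ ‖φ y‖) ∧
      ∀ x : ℝ, ∃ k : ℤ, ∀ y, |y| ≤ δ → ε ≤ ‖φ (d * (x + k) + y)‖ := by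
    intro d
    by_cases hd : d.Coprime N
    · obtain ⟨ε, hε, δ, hδ, H⟩ := equipos N B L h hBN φ hc h0 hφ d hd
      exact ⟨ε, hε, δ, hδ, fun _ => H⟩
    · exact ⟨1, one_pos, 1, one_pos, fun h => absurd h hd⟩
  choose ε hε δ hδ H using hE
  have hstep : ∀ (d : ℕ) (s : {p : ℕ × Finset ℤ // Good N B p.1 p.2}),
      ∃ s' : {p : ℕ × Finset ℤ // Good N B p.1 p.2}, s.1.1 < s'.1.1 ∧ s.1.2 ⊆ s'.1.2 ∧
        (d.Coprime N → ∀ l ∈ s'.1.2, ∀ y, |y| ≤ δ d / 2 →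
          ε d ≤ ‖φ (d * l / (N : ℝ) ^ s'.1.1 + y)‖) := by
    rintro d ⟨⟨n, S⟩, hS⟩
    by_cases hd : d.Coprime N
    · obtain ⟨n', S', a, b, c, e⟩ := step N B L h φ d (ε d) (δ d) (hδ d) (H d hd).1 (H d hd).2 n S hS
      exact ⟨⟨⟨n', S'⟩, c⟩, a, b, fun _ => e⟩
    · obtain ⟨S', a, b⟩ := good_ext N B L h n S hS
      exact ⟨⟨⟨n + 1, S'⟩, b⟩, Nat.lt_succ_self n, a, fun h => absurd h hd⟩
  choose st hst1 hst2 hst3 using hstep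
  have hinit : Good N B 0 {0} := by
    refine ⟨by simp, ?_⟩
    intro d _ l hl l' hl' hne
    simp at hl hl'
    omega
  let s : ℕ → {p : ℕ × Finset ℤ // Good N B p.1 p.2} :=
    fun i => Nat.rec ⟨(0, {0}), hinit⟩ (fun j p => st (Nat.unpair j).1 p) i
  have hs : ∀ i, s (i + 1) = st (Nat.unpair i).1 (s i) := fun i => rfl
  refine ⟨fun i => (s i).1.1, fun i => (s i).1.2, ?_, ?_, fun i => (s i).2, ?_⟩
  · refine strictMono_nat_of_lt_succ fun i => ?_
    simp only [hs]; exact hst1 _ _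
  · refine monotone_nat_of_le_succ fun i => ?_
    simp only [hs]; exact hst2 _ _
  · intro d hd
    refine ⟨ε d, hε d, δ d / 2, half_pos (hδ d), fun i => Nat.pair d i + 1, ?_, ?_⟩
    · refine Filter.tendsto_atTop_mono (fun i => ?_) Filter.tendsto_id
      exact (Nat.right_le_pair d i).trans (Nat.le_succ _)
    · intro i
      simp only [hs, Nat.unpair_pair]
      exact hst3 d _ hd

lemma hasSum_one (N : ℕ) (B : Finset ℤ) (hN : 2 ≤ N) (hB : 2 ≤ B.card)
    (φ : ℝ → ℂ) (hc : Continuous φ) (h0 : φ 0 = 1) (hle : ∀ t, ‖φ t‖ ≤ 1)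
    (hφ : ∀ t, φ t = mB B (t / N) * φ (t / N))
    (n : ℕ → ℕ) (S : ℕ → Finset ℤ) (hn : StrictMono n) (hS : Monotone S)
    (hG : ∀ i, Good N B (n i) (S i)) (d : ℕ) (hd : d.Coprime N)
    (ε δ : ℝ) (hε : 0 < ε) (hδ : 0 < δ) (u : ℕ → ℕ) (hu : Filter.Tendsto u Filter.atTop Filter.atTop)
    (H : ∀ i, ∀ l ∈ S (u i), ∀ y, |y| ≤ δ → ε ≤ ‖φ (d * l / (N : ℝ) ^ (n (u i)) + y)‖) (t : ℝ) :
    HasSum (fun l : {l : ℤ // ∃ i, l ∈ S i} => ‖φ (t + d * (l : ℤ))‖ ^ 2) 1 := by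
  classical
  have hpow : Filter.Tendsto (fun i => (N : ℝ) ^ n (u i)) Filter.atTop Filter.atTop :=
    (tendsto_pow_atTop_atTop_of_one_lt
      (by exact_mod_cast (by omega : 1 < N) : (1 : ℝ) < N)).comp (hn.tendsto_atTop.comp hu)
  let ι := {l : ℤ // ∃ i, l ∈ S i}
  let g : ι → ℝ := fun l => ‖φ (t + d * (l : ℤ))‖ ^ 2
  let Q : ℕ → ι → ℝ := fun i l => if (l : ℤ) ∈ S i then ‖PP N B (n i) (t + d * (l : ℤ))‖ ^ 2 else 0
  have hQsupp : ∀ i, HasSum (Q i) 1 := by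
    intro i
    have hpar := PP_parseval N B hB (n i) (S i) d (hG i).1 ((hG i).2 d hd) t
    let T : Finset ι := (S i).subtype (fun l => ∃ i, l ∈ S i)
    have h1 : HasSum (Q i) (∑ l ∈ T, Q i l) := by
      refine hasSum_sum_of_ne_finset_zero ?_
      intro l hl
      have : (l : ℤ) ∉ S i := fun hmm => hl (Finset.mem_subtype.2 hmm)
      simp [Q, this]
    have h2 : ∑ l ∈ T, Q i l = 1 := by
      rw [← hpar]
      have h3 : ∑ l ∈ T, Q i l = ∑ l ∈ T, ‖PP N B (n i) (t + d * (l : ℤ))‖ ^ 2 := by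
        refine Finset.sum_congr rfl fun l hl => ?_
        have : (l : ℤ) ∈ S i := Finset.mem_subtype.1 hl
        simp [Q, this]
      rw [h3]
      exact Finset.sum_subtype_of_mem (fun l : ℤ => ‖PP N B (n i) (t + d * l)‖ ^ 2)
        (fun l hl => ⟨i, hl⟩)
    rwa [h2] at h1
  have hgQ : ∀ i (l : ι), (l : ℤ) ∈ S i → g l ≤ Q i l := by
    intro i l hl
    simp only [g, Q, hl, if_true]
    rw [phi_iter N B φ hφ (n i), norm_mul]
    gcongr
    exact mul_le_of_le_one_right (norm_nonneg _) (hle _)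
  have hQ0 : ∀ i l, 0 ≤ Q i l := by
    intro i l; simp only [Q]; split_ifs <;> positivity
  have hsum : Summable g := by
    refine summable_of_sum_le (c := 1) (fun l => by simp only [g, Pi.zero_apply]; positivity) ?_
    intro T
    have hex : ∃ i, ∀ l ∈ T, (l : ℤ) ∈ S i := by
      induction T using Finset.induction_on with
      | empty => exact ⟨0, by simp⟩
      | insert a T _ ih =>
        obtain ⟨i, hi⟩ := ih
        obtain ⟨j, hj⟩ := a.2
        refine ⟨max i j, fun l hl => ?_⟩
        rcases Finset.mem_insert.1 hl with rfl | hl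
        · exact hS (le_max_right i j) hj
        · exact hS (le_max_left i j) (hi l hl)
    obtain ⟨i, hi⟩ := hex
    calc ∑ l ∈ T, g l ≤ ∑ l ∈ T, Q i l := Finset.sum_le_sum fun l hl => hgQ i l (hi l hl)
      _ ≤ 1 := sum_le_hasSum T (fun l _ => hQ0 i l) (hQsupp i)
  have hlim : Filter.Tendsto (fun i => ∑' l, Q (u i) l) Filter.atTop (nhds (∑' l, g l)) := by
    refine tendsto_tsum_of_dominated_convergence (bound := fun l => (ε ^ 2)⁻¹ * g l)
      (hsum.mul_left _) ?_ ?_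
    · intro l
      obtain ⟨j, hj⟩ := l.2
      have hmem : ∀ᶠ i in Filter.atTop, (l : ℤ) ∈ S (u i) :=
        (hu.eventually_ge_atTop j).mono fun i hi => hS hi hj
      have hφlim : Filter.Tendsto (fun i => φ ((t + d * (l : ℤ)) / (N : ℝ) ^ n (u i)))
          Filter.atTop (nhds 1) := by
        rw [← h0]
        exact (hc.tendsto 0).comp (Filter.Tendsto.const_div_atTop hpow _)
      have h1 : Filter.Tendsto (fun i => g l / ‖φ ((t + d * (l : ℤ)) / (N : ℝ) ^ n (u i))‖ ^ 2)
          Filter.atTop (nhds (g l)) := by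
        have := (tendsto_const_nhds (x := g l)).div (hφlim.norm.pow 2) (by simp)
        rw [norm_one, one_pow, div_one] at this
        exact this
      refine h1.congr' ?_
      filter_upwards [hmem, hφlim.eventually_ne one_ne_zero] with i hi hne
      simp only [g, Q, hi, if_true]
      rw [phi_iter N B φ hφ (n (u i)) (t + d * (l : ℤ)), norm_mul, mul_pow]
      have : ‖φ ((t + d * (l : ℤ)) / (N : ℝ) ^ n (u i))‖ ≠ 0 := norm_ne_zero_iff.2 hne
      field_simp
    · have hsm : ∀ᶠ i in Filter.atTop, |t / (N : ℝ) ^ n (u i)| ≤ δ := by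
        have h1 := (Filter.Tendsto.const_div_atTop hpow t).abs
        rw [abs_zero] at h1
        exact (h1.eventually (gt_mem_nhds hδ)).mono fun _ h => h.le
      filter_upwards [hsm] with i hi l
      rw [Real.norm_of_nonneg (hQ0 _ _)]
      by_cases hl : (l : ℤ) ∈ S (u i)
      · have h1 := H i l hl _ hi
        have e : (d : ℝ) * (l : ℤ) / (N : ℝ) ^ n (u i) + t / (N : ℝ) ^ n (u i)
            = (t + d * (l : ℤ)) / (N : ℝ) ^ n (u i) := by ring
        rw [e] at h1
        simp only [Q, g, hl, if_true]
        rw [phi_iter N B φ hφ (n (u i)) (t + d * (l : ℤ)), norm_mul, mul_pow, ← div_eq_inv_mul,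
          le_div_iff₀ (by positivity)]
        gcongr
      · simp only [Q, hl, if_false, g]; positivity
  have hone : ∀ i, ∑' l, Q (u i) l = 1 := fun i => (hQsupp (u i)).tsum_eq
  simp only [hone] at hlim
  have := tendsto_nhds_unique hlim tendsto_const_nhds
  have h2 := hsum.hasSum
  rw [this] at h2
  exact h2

noncomputable def FT (μ : Measure ℝ) (t : ℝ) : ℂ := ∫ x, ee (t * x) ∂μ

lemma FT_charFun (μ : Measure ℝ) (t : ℝ) : FT μ t = charFun μ (2 * Real.pi * t) := by
  rw [charFun_apply_real, FT]
  refine integral_congr_ae (Filter.Eventually.of_forall fun x => ?_)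
  simp only [ee]; congr 1; push_cast; ring

lemma FT_continuous (μ : Measure ℝ) [IsProbabilityMeasure μ] : Continuous (FT μ) := by
  have : FT μ = fun t => charFun μ (2 * Real.pi * t) := funext (FT_charFun μ)
  rw [this]
  exact continuous_charFun.comp (by fun_prop)

lemma FT_zero (μ : Measure ℝ) [IsProbabilityMeasure μ] : FT μ 0 = 1 := by
  simp [FT, ee_zero]

lemma FT_le (μ : Measure ℝ) [IsProbabilityMeasure μ] (t : ℝ) : ‖FT μ t‖ ≤ 1 := by
  rw [FT_charFun]; exact norm_charFun_le_one _

lemma integrable_ee (μ : Measure ℝ) [IsFiniteMeasure μ] (t : ℝ) :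
    Integrable (fun x => ee (t * x)) μ := by
  refine Integrable.of_bound (continuous_ee.comp (by fun_prop)).aestronglyMeasurable 1 ?_
  exact Filter.Eventually.of_forall fun x => (norm_ee _).le

lemma FT_eq (N : ℕ) (B : Finset ℤ)
    (μ : Measure ℝ) [IsProbabilityMeasure μ]
    (hμ : μ = (B.card : ℝ≥0∞)⁻¹ •
      ∑ b ∈ B, Measure.map (fun x : ℝ => (x + (b : ℝ)) / (N : ℝ)) μ) (t : ℝ) :
    FT μ t = mB B (t / N) * FT μ (t / N) := by
  have h1 := congrArg (fun ν => FT ν t) hμ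
  refine h1.trans ?_
  have hm : ∀ b : ℤ, Measurable (fun x : ℝ => (x + (b : ℝ)) / (N : ℝ)) := fun b => by fun_prop
  have hp : ∀ b : ℤ, IsProbabilityMeasure (Measure.map (fun x : ℝ => (x + (b : ℝ)) / (N : ℝ)) μ) :=
    fun b => Measure.isProbabilityMeasure_map (hm b).aemeasurable
  rw [FT, integral_smul_measure, integral_finsetSum_measure (fun b _ => integrable_ee _ t)]
  rw [mB, mul_assoc, Finset.sum_mul]
  have : ∀ b ∈ B, ∫ x, ee (t * x) ∂(Measure.map (fun x : ℝ => (x + (b : ℝ)) / (N : ℝ)) μ)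
      = ee ((b : ℝ) * (t / N)) * FT μ (t / N) := by
    intro b _
    rw [integral_map (hm b).aemeasurable (integrable_ee _ t).aestronglyMeasurable, FT, ← integral_const_mul]
    refine integral_congr_ae (Filter.Eventually.of_forall fun x => ?_)
    simp only
    rw [← ee_add]; congr 1; ring
  rw [Finset.sum_congr rfl this]
  simp

lemma real_zero (μ : Measure ℝ) [IsProbabilityMeasure μ] (g : ℝ → ℝ) (hg : Integrable g μ)
    (h : ∀ t : ℝ, ∫ x, (g x : ℂ) * ee (t * x) ∂μ = 0) : g =ᵐ[μ] 0 := by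
  have hf1 : ∫⁻ x, ENNReal.ofReal (g x) ∂μ ≠ ⊤ := (Integrable.lintegral_lt_top hg).ne
  have hf2 : ∫⁻ x, ENNReal.ofReal (-g x) ∂μ ≠ ⊤ := (Integrable.lintegral_lt_top hg.neg).ne
  have : IsFiniteMeasure (μ.withDensity fun x => ENNReal.ofReal (g x)) :=
    isFiniteMeasure_withDensity hf1
  have : IsFiniteMeasure (μ.withDensity fun x => ENNReal.ofReal (-g x)) :=
    isFiniteMeasure_withDensity hf2
  have hm1 : AEMeasurable (fun x => ENNReal.ofReal (g x)) μ := hg.aemeasurable.ennreal_ofReal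
  have hm2 : AEMeasurable (fun x => ENNReal.ofReal (-g x)) μ := hg.aemeasurable.neg.ennreal_ofReal
  have hFT : ∀ t, FT (μ.withDensity fun x => ENNReal.ofReal (g x)) t
      = FT (μ.withDensity fun x => ENNReal.ofReal (-g x)) t := by
    intro t
    have i1 := (integrable_ee (μ.withDensity fun x => ENNReal.ofReal (g x)) t)
    have i2 := (integrable_ee (μ.withDensity fun x => ENNReal.ofReal (-g x)) t)
    rw [integrable_withDensity_iff_integrable_smul₀' hm1 (by simp)] at i1
    rw [integrable_withDensity_iff_integrable_smul₀' hm2 (by simp)] at i2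
    rw [FT, FT, integral_withDensity_eq_integral_toReal_smul₀ hm1 (by simp),
      integral_withDensity_eq_integral_toReal_smul₀ hm2 (by simp), ← sub_eq_zero,
      ← integral_sub i1 i2, ← h t]
    refine integral_congr_ae (Filter.Eventually.of_forall fun x => ?_)
    simp only
    rw [← sub_smul, Complex.real_smul]
    congr 2
    rw [ENNReal.toReal_ofReal', ENNReal.toReal_ofReal']
    exact max_zero_sub_max_neg_zero_eq_self _
  have heq := Measure.ext_of_charFun (μ := μ.withDensity fun x => ENNReal.ofReal (g x))
    (ν := μ.withDensity fun x => ENNReal.ofReal (-g x)) (by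
      funext s
      have := hFT (s / (2 * Real.pi))
      rw [FT_charFun, FT_charFun] at this
      have e : 2 * Real.pi * (s / (2 * Real.pi)) = s := by field_simp
      rwa [e] at this)
  rw [withDensity_eq_iff hm1 hm2 hf1] at heq
  filter_upwards [heq] with x hx
  have := congrArg ENNReal.toReal hx
  rw [ENNReal.toReal_ofReal', ENNReal.toReal_ofReal'] at this
  have h2 := max_zero_sub_max_neg_zero_eq_self (g x)
  rw [this, sub_self] at h2
  exact h2.symm

lemma cplx_zero (μ : Measure ℝ) [IsProbabilityMeasure μ] (f : ℝ → ℂ) (hf : Integrable f μ)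
    (h : ∀ t : ℝ, ∫ x, f x * ee (t * x) ∂μ = 0) : f =ᵐ[μ] 0 := by
  have hi : ∀ t, Integrable (fun x => f x * ee (t * x)) μ := by
    intro t
    refine hf.mul_bdd (c := 1) (continuous_ee.comp (by fun_prop)).aestronglyMeasurable ?_
    exact Filter.Eventually.of_forall fun x => (norm_ee _).le
  have hcj : Integrable (fun x => (starRingEnd ℂ) (f x)) μ :=
    (LinearIsometryEquiv.integrable_comp_iff Complex.conjLIE).2 hf
  have hi' : ∀ t, Integrable (fun x => (starRingEnd ℂ) (f x) * ee (t * x)) μ := by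
    intro t
    refine hcj.mul_bdd (c := 1) (continuous_ee.comp (by fun_prop)).aestronglyMeasurable ?_
    exact Filter.Eventually.of_forall fun x => (norm_ee _).le
  have h' : ∀ t : ℝ, ∫ x, (starRingEnd ℂ) (f x) * ee (t * x) ∂μ = 0 := by
    intro t
    have h1 := congrArg (starRingEnd ℂ) (h (-t))
    rw [← integral_conj, map_zero] at h1
    rw [← h1]
    refine integral_congr_ae (Filter.Eventually.of_forall fun x => ?_)
    simp [conj_ee]
  have hre := real_zero μ (fun x => (f x).re) hf.re (by
    intro t
    have e : ∀ x, (((f x).re : ℝ) : ℂ) * ee (t * x)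
        = (1 / 2 : ℂ) * (f x * ee (t * x) + (starRingEnd ℂ) (f x) * ee (t * x)) := by
      intro x; rw [Complex.re_eq_add_conj]; ring
    simp only [e]
    rw [integral_const_mul, integral_add (hi t) (hi' t), h, h']; simp)
  have him := real_zero μ (fun x => (f x).im) hf.im (by
    intro t
    have e : ∀ x, (((f x).im : ℝ) : ℂ) * ee (t * x)
        = (1 / (2 * Complex.I) : ℂ) * (f x * ee (t * x) - (starRingEnd ℂ) (f x) * ee (t * x)) := by
      intro x; rw [Complex.im_eq_sub_conj]; ring
    simp only [e]
    rw [integral_const_mul, integral_sub (hi t) (hi' t), h, h']; simp)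
  filter_upwards [hre, him] with x h1 h2
  exact Complex.ext h1 h2

lemma memLp_ee (μ : Measure ℝ) [IsProbabilityMeasure μ] (t : ℝ) :
    MemLp (fun x => ee (t * x)) 2 μ := by
  refine MemLp.of_bound (continuous_ee.comp (by fun_prop)).aestronglyMeasurable 1 ?_
  exact Filter.Eventually.of_forall fun x => (norm_ee _).le

lemma mem_closure_of_parseval {E ι : Type*} [NormedAddCommGroup E] [InnerProductSpace ℂ E]
    (v : ι → E) (hv : Orthonormal ℂ v) (x : E)
    (hs : HasSum (fun i => ‖inner ℂ (v i) x‖ ^ 2) (‖x‖ ^ 2)) :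
    x ∈ (Submodule.span ℂ (Set.range v)).topologicalClosure := by
  have hid : ∀ s : Finset ι, ‖x - ∑ i ∈ s, inner ℂ (v i) x • v i‖ ^ 2
      = ‖x‖ ^ 2 - ∑ i ∈ s, ‖inner ℂ (v i) x‖ ^ 2 := by
    intro s
    set w := ∑ i ∈ s, inner ℂ (v i) x • v i with hw
    have h1 : inner ℂ x w = ((∑ i ∈ s, ‖inner ℂ (v i) x‖ ^ 2 : ℝ) : ℂ) := by
      rw [hw, inner_sum]; push_cast
      refine Finset.sum_congr rfl fun i _ => ?_
      rw [inner_smul_right, ← inner_conj_symm x (v i), RCLike.mul_conj]; rfl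
    have h2 : inner ℂ w w = ((∑ i ∈ s, ‖inner ℂ (v i) x‖ ^ 2 : ℝ) : ℂ) := by
      rw [hw, hv.inner_sum]; push_cast
      refine Finset.sum_congr rfl fun i _ => ?_
      rw [RCLike.conj_mul]; rfl
    have h3 : ‖w‖ ^ 2 = ∑ i ∈ s, ‖inner ℂ (v i) x‖ ^ 2 := by
      rw [@norm_sq_eq_re_inner ℂ, h2, RCLike.re_eq_complex_re, Complex.ofReal_re]
    rw [@norm_sub_sq ℂ, h1, h3, RCLike.re_eq_complex_re, Complex.ofReal_re]; ring
  have hmem : ∀ s : Finset ι, ∑ i ∈ s, inner ℂ (v i) x • v i ∈ Submodule.span ℂ (Set.range v) :=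
    fun s => Submodule.sum_mem _ fun i _ =>
      Submodule.smul_mem _ _ (Submodule.subset_span ⟨i, rfl⟩)
  refine mem_closure_of_tendsto (b := Filter.atTop)
    (f := fun s : Finset ι => ∑ i ∈ s, inner ℂ (v i) x • v i) ?_
    (Filter.Eventually.of_forall hmem)
  rw [tendsto_iff_norm_sub_tendsto_zero]
  have h4 : Filter.Tendsto (fun s : Finset ι => ‖x - ∑ i ∈ s, inner ℂ (v i) x • v i‖ ^ 2)
      Filter.atTop (nhds 0) := by
    simp only [hid]
    have h5 : Filter.Tendsto (fun s : Finset ι => ∑ i ∈ s, ‖inner ℂ (v i) x‖ ^ 2)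
      Filter.atTop (nhds (‖x‖ ^ 2)) := hs
    have h6 := h5.const_sub (‖x‖ ^ 2)
    rwa [sub_self] at h6
  have h5 := h4.sqrt
  simp only [Real.sqrt_sq (norm_nonneg _), Real.sqrt_zero] at h5
  simpa only [norm_sub_rev] using h5

lemma spectrum_of (μ : Measure ℝ) [IsProbabilityMeasure μ] (Λ : Set ℝ)
    (ho : ∀ l ∈ Λ, ∀ l' ∈ Λ, l ≠ l' → FT μ (l - l') = 0)
    (hs : ∀ t, HasSum (fun l : Λ => ‖FT μ (t + l)‖ ^ 2) 1) : IsSpectrum μ Λ := by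
  let E : ℝ → Lp ℂ 2 μ := fun t => (memLp_ee μ t).toLp
  have hE : ∀ t, (E t : ℝ → ℂ) =ᵐ[μ] fun x => ee (t * x) := fun t => (memLp_ee μ t).coeFn_toLp
  have hin : ∀ (s : ℝ) (f : Lp ℂ 2 μ), inner ℂ (E s) f = ∫ x, f x * ee (-s * x) ∂μ := by
    intro s f
    rw [L2.inner_def]
    refine integral_congr_ae ?_
    filter_upwards [hE s] with x hx
    rw [hx, RCLike.inner_apply, conj_ee, neg_mul]
  have hin2 : ∀ s t, inner ℂ (E s) (E t) = FT μ (t - s) := by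
    intro s t
    rw [hin]
    refine integral_congr_ae ?_
    filter_upwards [hE t] with x hx
    rw [hx, ← ee_add]; congr 1; ring
  have hnorm : ∀ t, ‖E t‖ ^ 2 = 1 := by
    intro t
    rw [@norm_sq_eq_re_inner ℂ, hin2, sub_self, FT_zero]; simp
  have hFT_neg : ∀ t, ‖FT μ (-t)‖ = ‖FT μ t‖ := by
    intro t
    have h1 := hin2 t 0
    have h2 := hin2 0 t
    rw [zero_sub] at h1
    rw [sub_zero] at h2
    rw [← h1, ← h2, norm_inner_symm]
  have horth : Orthonormal ℂ (fun l : Λ => E l) := by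
    constructor
    · intro l
      have := hnorm l
      nlinarith [norm_nonneg (E l), sq_nonneg (‖E l‖ - 1)]
    · intro l l' hne
      simp only [hin2]
      exact ho _ l'.2 _ l.2 (fun e => hne (Subtype.ext e.symm))
  refine ⟨fun l => E l, fun l => ?_, horth, ?_⟩
  · filter_upwards [hE l] with x hx
    rw [hx, expFun_eq]
  · have hmem : ∀ t, E t ∈ (Submodule.span ℂ (Set.range fun l : Λ => E l)).topologicalClosure := by
      intro t
      refine mem_closure_of_parseval _ horth _ ?_
      rw [hnorm]
      have := hs (-t)
      convert this using 3 with l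
      rw [hin2, ← hFT_neg]; congr 2; ring
    rw [Submodule.topologicalClosure_eq_top_iff, Submodule.eq_bot_iff]
    intro f hf
    rw [← Submodule.orthogonal_closure] at hf
    rw [Lp.eq_zero_iff_ae_eq_zero]
    refine cplx_zero μ f ((Lp.memLp f).integrable (by norm_num)) ?_
    intro t
    have := hf _ (hmem (-t))
    rw [hin] at this
    simpa using this

theorem simultaneous_scaled_spectra (N : ℕ) (B L : Finset ℤ)
    (h : IsHadamardTriple N B L) (hBN : B.card < N)
    (μ : Measure ℝ) [IsProbabilityMeasure μ]
    (hμ : μ = (B.card : ℝ≥0∞)⁻¹ •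
      ∑ b ∈ B, Measure.map (fun x : ℝ => (x + (b : ℝ)) / (N : ℝ)) μ)
    (k : ℕ) (hk : 1 ≤ k) (p : Fin k → ℕ) (hp : ∀ i, 2 ≤ p i)
    (hcop : Nat.Coprime (∏ i, p i) N) :
    ∃ Λ : Set ℝ, ∀ n : Fin k → ℕ,
      IsSpectrum μ ((fun x : ℝ => (∏ i, (p i : ℝ) ^ (n i)) * x) '' Λ) := by
  obtain ⟨n, S, hn, hS, hG, H⟩ := construct N B L h hBN (FT μ) (FT_continuous μ) (FT_zero μ)
    (FT_eq N B μ hμ)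
  refine ⟨Set.range (fun l : {l : ℤ // ∃ i, l ∈ S i} => ((l : ℤ) : ℝ)), fun e => ?_⟩
  set d : ℕ := ∏ i, p i ^ e i with hd
  have hdc : d.Coprime N := by
    rw [hd]
    refine Nat.Coprime.prod_left fun i _ => Nat.Coprime.pow_left _ ?_
    exact Nat.Coprime.coprime_dvd_left (Finset.dvd_prod_of_mem p (Finset.mem_univ i)) hcop
  have hdr : (∏ i, (p i : ℝ) ^ (e i)) = d := by rw [hd]; push_cast; rfl
  have hd0 : (d : ℝ) ≠ 0 := by
    have : d ≠ 0 := by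
      intro h0
      rw [h0, Nat.coprime_zero_left] at hdc
      have := h.1
      omega
    exact_mod_cast this
  rw [hdr, ← Set.range_comp]
  obtain ⟨ε, hε, δ, hδ, u, hu, H'⟩ := H d hdc
  have hsum := hasSum_one N B h.1 h.2.1 (FT μ) (FT_continuous μ) (FT_zero μ) (FT_le μ)
    (FT_eq N B μ hμ) n S hn hS hG d hdc ε δ hε hδ u hu H'
  have hinj : Function.Injective
      ((fun x : ℝ => (d : ℝ) * x) ∘ (fun l : {l : ℤ // ∃ i, l ∈ S i} => ((l : ℤ) : ℝ))) := by
    intro a b hab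
    have h1 : ((a : ℤ) : ℝ) = ((b : ℤ) : ℝ) := mul_left_cancel₀ hd0 hab
    exact Subtype.ext (by exact_mod_cast h1)
  refine spectrum_of μ _ ?_ ?_
  · rintro _ ⟨⟨l, i, hl⟩, rfl⟩ _ ⟨⟨l', j, hl'⟩, rfl⟩ hne
    have hll : l ≠ l' := by rintro rfl; exact hne rfl
    have h1 := (hG (max i j)).2 d hdc l (hS (le_max_left i j) hl) l' (hS (le_max_right i j) hl') hll
    simp only [Function.comp]
    rw [← mul_sub, phi_iter N B (FT μ) (FT_eq N B μ hμ) (n (max i j)), h1, zero_mul]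
  · intro t
    rw [← (Equiv.ofInjective _ hinj).hasSum_iff]
    exact hsum t
end
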